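/- Let 𝕂 be an imaginary quadratic number field of class number one and, for N ≥ 3, define W : ℐ → ℝ by W(𝔫) := π·exp(−π·𝒩(𝔫)/N). Then there is a constant c = c(𝕂) such that for every N ≥ 3 and every nonzero ideal 𝔯 with 𝒩(𝔯) ≤ N/2, |∑_{𝔰∈ℙ} W(𝔯𝔰) − (N/𝒩(𝔯))/log(N/𝒩(𝔯))| ≤ c · (N/𝒩(𝔯)) / log²(N/𝒩(𝔯)). -/

import Mathlib

open NumberField

/-!
If `K` has a single infinite place, the integral ideals in an ideal class correspond, up to units
of finite number, to the points of a lattice, and the norm is a power of a vector-space norm.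
Counting lattice points in balls gives `#{I : 𝒩(I) ≤ t} = κ t + O(t ^ θ)` with
`θ = 1 - 1 / [K : ℚ]`, so by partial summation `(s - 1) ζ_K(s)` continues to `re s > θ` with
polynomial growth. The inequality
`|ζ_K(σ)| ^ 3 |ζ_K(σ + it)| ^ 4 |ζ_K(σ + 2it)| ≥ 1` then bounds `((s - 1) ζ_K(s))⁻¹` polynomially
up to the line `re s = 1`, whence `∑ log 𝒩(𝔭) 𝒩(𝔭) ^ (-s) = 1 / (s - 1) + H(s)` for `re s > 1`, with
`H` and `H'` of polynomial growth there.

Since `Γ` decays rapidly on vertical lines, Mellin inversion of this identity on the line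
`re s = 1 + 1 / log X`, integrated by parts once, gives
`∑ log 𝒩(𝔭) exp (-𝒩(𝔭) / X) = X + O(X / log X)`. The weight `log 𝒩(𝔭)` may be replaced by `log X`
at the cost of a dyadic family of the unweighted sums, which yields
`∑ exp (-𝒩(𝔭) / X) = X / log X + O(X / log² X)`; the substitution `X = N / (π 𝒩(𝔯))` concludes.
-/

section LatticePoints

open Module MeasureTheory Metric ZLattice
open scoped Pointwise

variable {E : Type*} [NormedAddCommGroup E] [NormedSpace ℝ E] [FiniteDimensional ℝ E]

theorem finite_lattice_norm_le (L : Submodule ℤ E) [DiscreteTopology L] (R : ℝ) :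
    {v : L | ‖(v : E)‖ ≤ R}.Finite := by
  have : DiscreteTopology L.toAddSubgroup := ‹DiscreteTopology L›
  have hfin := Metric.finite_isBounded_inter_isClosed DiscreteTopology.isDiscrete
    (isBounded_closedBall (x := (0 : E)) (r := R))
    (AddSubgroup.isClosed_of_discrete (H := L.toAddSubgroup))
  exact (hfin.preimage Subtype.val_injective.injOn).subset fun v hv ↦
    ⟨mem_closedBall_zero_iff.2 hv, v.2⟩

variable [MeasurableSpace E] [BorelSpace E] {L : Submodule ℤ E} [DiscreteTopology L]
  [IsZLattice ℝ L] {μ : Measure E} [μ.IsAddHaarMeasure] {F : Set E} {D : ℝ}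

theorem measureReal_biUnion_vadd_fundamentalDomain (hF : IsAddFundamentalDomain L F μ)
    (s : Finset L) : μ.real (⋃ v ∈ s, v +ᵥ F) = s.card * covolume L μ := by
  have : VAddInvariantMeasure L E μ := inferInstanceAs (VAddInvariantMeasure L.toAddSubgroup E μ)
  have : MeasurableVAdd L E := inferInstanceAs (MeasurableVAdd L.toAddSubgroup E)
  rw [measureReal_def, measure_biUnion_finset₀ (fun v _ w _ hvw ↦ hF.aedisjoint hvw)
    fun v _ ↦ hF.nullMeasurableSet_vadd v]
  simp [covolume_eq_measure_fundamentalDomain L μ hF, measureReal_def]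

theorem card_mul_covolume_le (hF : IsAddFundamentalDomain L F μ) (hD : F ⊆ closedBall 0 D)
    {R : ℝ} {s : Finset L} (hs : ∀ v ∈ s, ‖(v : E)‖ ≤ R) :
    s.card * covolume L μ ≤ μ.real (closedBall 0 (R + D)) := by
  rw [← measureReal_biUnion_vadd_fundamentalDomain hF]
  refine measureReal_mono (Set.iUnion₂_subset fun v hv ↦ ?_) measure_closedBall_lt_top.ne
  rintro _ ⟨x, hx, rfl⟩
  simpa [Submodule.vadd_def] using
    norm_add_le_of_le (hs v hv) (mem_closedBall_zero_iff.1 (hD hx))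

theorem le_card_mul_covolume (hF : IsAddFundamentalDomain L F μ) (hD : F ⊆ closedBall 0 D)
    {R : ℝ} {s : Finset L} (hs : ∀ v : L, ‖(v : E)‖ ≤ R → v ∈ s) :
    μ.real (closedBall 0 (R - D)) ≤ s.card * covolume L μ := by
  rw [← measureReal_biUnion_vadd_fundamentalDomain hF]
  have hfin : μ (⋃ v ∈ s, v +ᵥ F) ≠ ⊤ := by
    refine (measure_biUnion_lt_top s.finite_toSet fun v _ ↦ ?_).ne
    rw [show μ (v +ᵥ F) = μ F from measure_vadd μ (v : E) F]
    exact (measure_mono hD).trans_lt measure_closedBall_lt_top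
  refine ENNReal.toReal_mono hfin (measure_mono_ae ?_)
  filter_upwards [hF.ae_covers] with x ⟨v, hv⟩ hx
  have hx' : ‖x‖ ≤ R - D := mem_closedBall_zero_iff.1 hx
  have hvx : ‖(v : E) + x‖ ≤ D := by
    simpa [Submodule.vadd_def] using hD hv
  have hnorm : ‖((-v : L) : E)‖ ≤ R := by
    calc ‖((-v : L) : E)‖ = ‖x - (v + x)‖ := by simp
      _ ≤ ‖x‖ + ‖(v : E) + x‖ := norm_sub_le _ _
      _ ≤ R := by linarith
  exact Set.mem_iUnion₂.2 ⟨-v, hs _ hnorm, Set.mem_vadd_set.2 ⟨v +ᵥ x, hv, neg_vadd_vadd v x⟩⟩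

theorem abs_pow_sub_pow_le_of_abs_sub_le {x R D : ℝ} (hx : 0 ≤ x) (hR : 1 ≤ R) (hxR : |x - R| ≤ D)
    (d : ℕ) : |x ^ d - R ^ d| ≤ D * d * (1 + D) ^ (d - 1) * R ^ (d - 1) := by
  have hD : 0 ≤ D := (abs_nonneg _).trans hxR
  have hmax : max |x| |R| ≤ (1 + D) * R := by
    rw [abs_of_nonneg hx, abs_of_nonneg (by linarith : 0 ≤ R)]
    exact max_le (by nlinarith [le_abs_self (x - R)]) (by nlinarith)
  calc |x ^ d - R ^ d| ≤ |x - R| * d * max |x| |R| ^ (d - 1) := abs_pow_sub_pow_le _ _ _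
    _ ≤ D * d * ((1 + D) * R) ^ (d - 1) := by gcongr
    _ = D * d * (1 + D) ^ (d - 1) * R ^ (d - 1) := by rw [mul_pow]; ring

variable (μ) in
theorem measureReal_closedBall_max_zero [Nontrivial E] (x : E) (r : ℝ) :
    μ.real (closedBall x (max r 0)) = μ.real (closedBall x r) := by
  rcases le_total 0 r with h | h
  · rw [max_eq_left h]
  · have hzero : μ.real (closedBall x 0) = 0 := by simp [measureReal_def]
    rw [max_eq_right h, hzero]
    exact (measureReal_mono_null (closedBall_subset_closedBall h) hzero
      measure_closedBall_lt_top.ne).symm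

variable (L μ) in
theorem exists_abs_card_lattice_norm_le_sub_le [Nontrivial E] : ∃ C : ℝ, ∀ R ≥ 1,
    |(Nat.card {v : L // ‖(v : E)‖ ≤ R} : ℝ)
        - μ.real (ball 0 1) / covolume L μ * R ^ finrank ℝ E| ≤ C * R ^ (finrank ℝ E - 1) := by
  let b := (Free.chooseBasis ℤ L).ofZLatticeBasis ℝ L
  have hF : IsAddFundamentalDomain L (ZSpan.fundamentalDomain b) μ :=
    ZLattice.isAddFundamentalDomain (Free.chooseBasis ℤ L) μ
  obtain ⟨D, hD, hFD⟩ := (ZSpan.fundamentalDomain_isBounded b).subset_closedBall_lt 0 0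
  set d := finrank ℝ E
  set V := μ.real (ball 0 1)
  set m := covolume L μ
  have hm : 0 < m := covolume_pos L μ
  have hball {r : ℝ} (hr : 0 ≤ r) : μ.real (closedBall 0 r) = r ^ d * V :=
    Measure.addHaar_real_closedBall μ 0 hr
  set B : ℝ := D * d * (1 + D) ^ (d - 1)
  refine ⟨B * V / m, fun R hR ↦ ?_⟩
  have hvol {x : ℝ} (hx : 0 ≤ x) (hxR : |x - R| ≤ D) :
      |x ^ d * V - R ^ d * V| ≤ B * R ^ (d - 1) * V := by
    rw [← sub_mul, abs_mul, abs_of_nonneg measureReal_nonneg]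
    exact mul_le_mul_of_nonneg_right (abs_pow_sub_pow_le_of_abs_sub_le hx hR hxR d)
      measureReal_nonneg
  have hfin := finite_lattice_norm_le L R
  rw [show Nat.card {v : L // ‖(v : E)‖ ≤ R} = hfin.toFinset.card from
    Nat.card_eq_card_finite_toFinset hfin]
  set n : ℝ := (hfin.toFinset.card : ℝ)
  have hupper : n * m ≤ (R + D) ^ d * V := by
    rw [← hball (by positivity)]
    exact card_mul_covolume_le hF hFD fun v ↦ hfin.mem_toFinset.1
  have hlower : max (R - D) 0 ^ d * V ≤ n * m := by
    rw [← hball (le_max_right _ _), measureReal_closedBall_max_zero]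
    exact le_card_mul_covolume hF hFD fun v ↦ hfin.mem_toFinset.2
  suffices |n * m - R ^ d * V| ≤ B * R ^ (d - 1) * V by
    calc |n - V / m * R ^ d| = |n * m - R ^ d * V| / m := by
          rw [← abs_of_pos hm, ← abs_div, abs_of_pos hm]; congr 1; field_simp
      _ ≤ B * R ^ (d - 1) * V / m := by gcongr
      _ = B * V / m * R ^ (d - 1) := by ring
  have h₁ := abs_le.1 (hvol (x := R + D) (by positivity) (by simp [abs_of_pos hD]))
  have h₂ := abs_le.1 (hvol (x := max (R - D) 0) (le_max_right _ _) (by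
    rw [abs_le]; constructor <;> rcases max_cases (R - D) 0 with h | h <;> linarith))
  exact abs_le.2 ⟨by linarith, by linarith⟩

end LatticePoints

section IdealCount

open NumberField.mixedEmbedding NumberField.mixedEmbedding.fundamentalCone NumberField.InfinitePlace
open Module nonZeroDivisors Filter Topology Ideal

theorem tendsto_div_of_abs_sub_mul_le {f : ℝ → ℝ} {κ B θ : ℝ} (hθ : θ < 1)
    (hf : ∀ s : ℝ, 1 ≤ s → |f s - κ * s| ≤ B * s ^ θ) :
    Tendsto (fun s ↦ f s / s) atTop (𝓝 κ) := by
  have hlim : Tendsto (fun s : ℝ ↦ B * s ^ (-(1 - θ))) atTop (𝓝 0) := by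
    simpa using (tendsto_rpow_neg_atTop (sub_pos.2 hθ)).const_mul B
  rw [tendsto_iff_norm_sub_tendsto_zero]
  refine squeeze_zero' (Eventually.of_forall fun _ ↦ norm_nonneg _) ?_ hlim
  filter_upwards [eventually_ge_atTop 1] with s hs
  have hs0 : 0 < s := zero_lt_one.trans_le hs
  calc ‖f s / s - κ‖ = |f s - κ * s| / s := by
        rw [Real.norm_eq_abs, ← abs_of_pos hs0, ← abs_div, abs_of_pos hs0]; congr 1; field_simp
    _ ≤ B * s ^ θ / s := by gcongr; exact hf s hs
    _ = B * s ^ (-(1 - θ)) := by rw [neg_sub, Real.rpow_sub_one hs0.ne', mul_div_assoc]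

variable (K : Type*) [Field K] [NumberField K]

theorem card_norm_le_mk_eq {C : ClassGroup (𝓞 K)} {J : (Ideal (𝓞 K))⁰}
    (hJ : ClassGroup.mk0 J = C⁻¹) (s : ℝ) :
    Nat.card {I : (Ideal (𝓞 K))⁰ // absNorm (I : Ideal (𝓞 K)) ≤ s ∧ ClassGroup.mk0 I = C}
      = Nat.card {I : (Ideal (𝓞 K))⁰ // (J : Ideal (𝓞 K)) ∣ I ∧
        Submodule.IsPrincipal (I : Ideal (𝓞 K)) ∧
        absNorm (I : Ideal (𝓞 K)) ≤ s * absNorm (J : Ideal (𝓞 K))} := by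
  have hJpos : (0 : ℝ) < absNorm (J : Ideal (𝓞 K)) :=
    Nat.cast_pos.2 (absNorm_pos_of_nonZeroDivisors J)
  refine Nat.card_congr (((Equiv.dvd J).subtypeEquiv fun I ↦ ?_).trans
    ((Equiv.subtypeSubtypeEquivSubtypeInter (fun I : (Ideal (𝓞 K))⁰ ↦ J ∣ I) _).trans
      (Equiv.subtypeEquivRight fun I ↦ by rw [nonZeroDivisors_dvd_iff_dvd_coe])))
  rw [← ClassGroup.mk0_eq_one_iff (SetLike.coe_mem _)]
  simp_rw [Equiv.dvd_apply, Submonoid.coe_mul, ← Submonoid.mul_def, _root_.map_mul, hJ,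
    inv_mul_eq_one, Nat.cast_mul, mul_comm s, eq_comm, and_comm, and_congr_left_iff]
  exact fun _ ↦ (mul_le_mul_iff_of_pos_left hJpos).symm

theorem card_norm_le_eq_sum_classGroup {s : ℝ} (hs : 0 ≤ s) :
    Nat.card {I : (Ideal (𝓞 K))⁰ // absNorm (I : Ideal (𝓞 K)) ≤ s} = ∑ C : ClassGroup (𝓞 K),
      Nat.card {I : (Ideal (𝓞 K))⁰ // absNorm (I : Ideal (𝓞 K)) ≤ s ∧ ClassGroup.mk0 I = C} := by
  have : Finite {I : (Ideal (𝓞 K))⁰ // absNorm (I : Ideal (𝓞 K)) ≤ s} := by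
    simp_rw [← Nat.le_floor_iff hs]
    exact finite_setOfPred_absNorm_le₀ ⌊s⌋₊
  rw [Nat.card_congr (Equiv.sigmaFiberEquiv fun I : {I : (Ideal (𝓞 K))⁰ //
    absNorm (I : Ideal (𝓞 K)) ≤ s} ↦ ClassGroup.mk0 I.1).symm, Nat.card_sigma]
  exact Finset.sum_congr rfl fun C _ ↦ Nat.card_congr
    (Equiv.subtypeSubtypeEquivSubtypeInter (fun I : (Ideal (𝓞 K))⁰ ↦ absNorm I.1 ≤ s)
      fun I ↦ ClassGroup.mk0 I = C)

theorem sum_card_norm_eq (n : ℕ) :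
    ∑ k ∈ Finset.Icc 1 n, Nat.card {I : Ideal (𝓞 K) // absNorm I = k} =
      Nat.card {I : (Ideal (𝓞 K))⁰ // absNorm (I : Ideal (𝓞 K)) ≤ n} := by
  rw [← add_left_inj 1, ← card_norm_le_eq_card_norm_le_add_one,
    show Finset.Icc 1 n = Finset.Ioc 0 n from Finset.Icc_succ_left_eq_Ioc _ _,
    show 1 = Nat.card {I : Ideal (𝓞 K) // absNorm I = 0} by simp [Ideal.absNorm_eq_zero_iff],
    Finset.sum_Ioc_add_eq_sum_Icc n.zero_le,
    ← Finset.card_preimage_eq_sum_card_image_eq fun k _ ↦ finite_setOfPred_absNorm_eq k]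
  simp [Set.coe_eq_subtype]

section OneInfinitePlace

variable [Subsingleton (InfinitePlace K)]

open scoped Classical in
variable {K} in
theorem mixedEmbedding_norm_eq_norm_pow (x : mixedSpace K) :
    mixedEmbedding.norm x = ‖x‖ ^ finrank ℚ K := by
  obtain ⟨w⟩ : Nonempty (InfinitePlace K) := inferInstance
  have := uniqueOfSubsingleton w
  rw [mixedEmbedding.norm_apply, norm_eq_sup'_normAtPlace, ← sum_mult_eq (K := K)]
  simp

theorem fundamentalCone_eq_compl_zero : fundamentalCone K = {0}ᶜ := by
  classical
  have : IsEmpty {w : InfinitePlace K // w ≠ Units.dirichletUnitTheorem.w₀} :=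
    ⟨fun w ↦ w.2 (Subsingleton.elim _ _)⟩
  ext x
  simp [fundamentalCone, mixedEmbedding_norm_eq_norm_pow, finrank_pos.ne',
    ZSpan.fundamentalDomain, Subsingleton.elim (logMap x) 0]

variable (J : (Ideal (𝓞 K))⁰)

open scoped Classical in
theorem card_idealSet_norm_le_add_one {R : ℝ} (hR : 0 ≤ R) :
    Nat.card {a : idealSet K J // mixedEmbedding.norm (a : mixedSpace K) ≤ R ^ finrank ℚ K} + 1 =
      Nat.card {v : idealLattice K (FractionalIdeal.mk0 K J) // ‖(v : mixedSpace K)‖ ≤ R} := by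
  have hfin := finite_lattice_norm_le (idealLattice K (FractionalIdeal.mk0 K J)) R
  rw [show Nat.card {v : idealLattice K (FractionalIdeal.mk0 K J) // ‖(v : mixedSpace K)‖ ≤ R} =
    Set.ncard {v : idealLattice K (FractionalIdeal.mk0 K J) | ‖(v : mixedSpace K)‖ ≤ R} from rfl,
    ← Set.ncard_sdiff_singleton_add_one (a := 0) (by simpa) hfin]
  congr 1
  have hpow (v : mixedSpace K) : mixedEmbedding.norm v ≤ R ^ finrank ℚ K ↔ ‖v‖ ≤ R := by
    rw [mixedEmbedding_norm_eq_norm_pow,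
      pow_le_pow_iff_left₀ (norm_nonneg v) hR finrank_pos.ne']
  have hcone (a : idealSet K J) : (a : mixedSpace K) ≠ 0 := by
    have := a.2.1
    rwa [fundamentalCone_eq_compl_zero] at this
  exact Nat.card_congr
    { toFun a := ⟨⟨a.1, a.1.2.2⟩, (hpow _).1 a.2, fun h ↦ hcone a.1 (congrArg Subtype.val h)⟩
      invFun v := ⟨⟨v.1, by
        rw [fundamentalCone_eq_compl_zero]
        exact fun h ↦ v.2.2 (Subtype.ext h), v.1.2⟩, (hpow _).2 v.2.1⟩
      left_inv _ := rfl
      right_inv _ := rfl }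

theorem exists_abs_card_isPrincipal_dvd_norm_le_sub_le : ∃ c C : ℝ, ∀ s : ℝ, 1 ≤ s →
    |(Nat.card {I : (Ideal (𝓞 K))⁰ // (J : Ideal (𝓞 K)) ∣ I ∧
        Submodule.IsPrincipal (I : Ideal (𝓞 K)) ∧ absNorm (I : Ideal (𝓞 K)) ≤ s} : ℝ) - c * s|
      ≤ C * s ^ (1 - (finrank ℚ K : ℝ)⁻¹) := by
  classical
  set L := idealLattice K (FractionalIdeal.mk0 K J)
  set d := finrank ℚ K
  have hd : 0 < d := finrank_pos
  obtain ⟨C, hC⟩ := exists_abs_card_lattice_norm_le_sub_le L MeasureTheory.Measure.addHaar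
  rw [mixedEmbedding.finrank] at hC
  set κ := MeasureTheory.Measure.addHaar.real (Metric.ball (0 : mixedSpace K) 1) /
    ZLattice.covolume L MeasureTheory.Measure.addHaar
  have hw : (1 : ℝ) ≤ Units.torsionOrder K := mod_cast (Units.torsionOrder_pos K)
  refine ⟨κ / Units.torsionOrder K, C + 1, fun s hs ↦ ?_⟩
  have hs0 : 0 ≤ s := zero_le_one.trans hs
  set R := s ^ (d : ℝ)⁻¹
  have hR : 1 ≤ R := Real.one_le_rpow hs (by positivity)
  have hRd : R ^ d = s := Real.rpow_inv_natCast_pow hs0 hd.ne'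
  have hRd' : R ^ (d - 1) = s ^ (1 - (d : ℝ)⁻¹) := by
    rw [← Real.rpow_natCast, ← Real.rpow_mul hs0]
    congr 1
    push_cast [Nat.cast_sub hd]
    field_simp
  have hcount := card_isPrincipal_dvd_norm_le K J s
  have hlattice := card_idealSet_norm_le_add_one K J (zero_le_one.trans hR)
  rw [hRd, ← hcount] at hlattice
  have hbound := hC R hR
  rw [hRd, hRd', ← hlattice] at hbound
  set n : ℝ := (Nat.card {I : (Ideal (𝓞 K))⁰ // (J : Ideal (𝓞 K)) ∣ I ∧
        Submodule.IsPrincipal (I : Ideal (𝓞 K)) ∧ absNorm (I : Ideal (𝓞 K)) ≤ s} : ℝ)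
  have hone : 1 ≤ s ^ (1 - (d : ℝ)⁻¹) := hRd' ▸ one_le_pow₀ hR
  push_cast at hbound
  calc |n - κ / Units.torsionOrder K * s|
      = |n * Units.torsionOrder K - κ * s| / Units.torsionOrder K := by
        rw [← abs_of_pos (zero_lt_one.trans_le hw), ← abs_div, abs_of_pos (zero_lt_one.trans_le hw)]
        congr 1
        field_simp
    _ ≤ |n * Units.torsionOrder K - κ * s| := div_le_self (abs_nonneg _) hw
    _ ≤ |n * Units.torsionOrder K + 1 - κ * s| + 1 := by
        simpa [add_sub_right_comm] using norm_sub_le (n * Units.torsionOrder K + 1 - κ * s) 1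
    _ ≤ (C + 1) * s ^ (1 - (d : ℝ)⁻¹) := by linarith

theorem exists_abs_card_norm_le_mk_eq_sub_le (C : ClassGroup (𝓞 K)) : ∃ c B : ℝ, ∀ s : ℝ, 1 ≤ s →
    |(Nat.card {I : (Ideal (𝓞 K))⁰ // absNorm (I : Ideal (𝓞 K)) ≤ s ∧ ClassGroup.mk0 I = C} : ℝ)
      - c * s| ≤ B * s ^ (1 - (finrank ℚ K : ℝ)⁻¹) := by
  obtain ⟨J, hJ⟩ := ClassGroup.mk0_surjective C⁻¹
  obtain ⟨c, B, hB⟩ := exists_abs_card_isPrincipal_dvd_norm_le_sub_le K J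
  set N : ℝ := (absNorm (J : Ideal (𝓞 K)) : ℝ)
  have hN : 1 ≤ N := Nat.one_le_cast.2 (absNorm_pos_of_nonZeroDivisors J)
  refine ⟨c * N, B * N ^ (1 - (finrank ℚ K : ℝ)⁻¹), fun s hs ↦ ?_⟩
  rw [card_norm_le_mk_eq K hJ, mul_assoc, mul_assoc,
    ← Real.mul_rpow (by positivity) (by positivity), mul_comm N s]
  exact hB (s * N) (by nlinarith)

theorem exists_abs_card_ideal_norm_le_sub_le : ∃ B : ℝ, ∀ s : ℝ, 1 ≤ s →
    |(Nat.card {I : (Ideal (𝓞 K))⁰ // absNorm (I : Ideal (𝓞 K)) ≤ s} : ℝ)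
      - dedekindZeta_residue K * s| ≤ B * s ^ (1 - (finrank ℚ K : ℝ)⁻¹) := by
  choose c B hB using exists_abs_card_norm_le_mk_eq_sub_le K
  have hsum : ∀ s : ℝ, 1 ≤ s →
      |(Nat.card {I : (Ideal (𝓞 K))⁰ // absNorm (I : Ideal (𝓞 K)) ≤ s} : ℝ) - (∑ C, c C) * s| ≤
        (∑ C, B C) * s ^ (1 - (finrank ℚ K : ℝ)⁻¹) := by
    intro s hs
    rw [card_norm_le_eq_sum_classGroup K (zero_le_one.trans hs), Finset.sum_mul, Finset.sum_mul,
      Nat.cast_sum, ← Finset.sum_sub_distrib]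
    exact (Finset.abs_sum_le_sum_abs _ _).trans (Finset.sum_le_sum fun C _ ↦ hB C s hs)
  suffices ∑ C, c C = dedekindZeta_residue K from ⟨∑ C, B C, this ▸ hsum⟩
  refine tendsto_nhds_unique ?_ (Ideal.tendsto_norm_le_div_atTop₀ K)
  exact tendsto_div_of_abs_sub_mul_le (by simp [finrank_pos]) hsum

theorem exists_abs_sum_card_norm_eq_sub_le : ∃ B : ℝ, ∀ t : ℝ, 1 ≤ t →
    |∑ k ∈ Finset.Icc 1 ⌊t⌋₊, (Nat.card {I : Ideal (𝓞 K) // absNorm I = k} : ℝ)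
      - dedekindZeta_residue K * t| ≤ B * t ^ (1 - (finrank ℚ K : ℝ)⁻¹) := by
  obtain ⟨B, hB⟩ := exists_abs_card_ideal_norm_le_sub_le K
  refine ⟨B, fun t ht ↦ ?_⟩
  have hcard := hB t ht
  simp_rw [← Nat.le_floor_iff (zero_le_one.trans ht)] at hcard
  rwa [← Nat.cast_sum, sum_card_norm_eq]

end OneInfinitePlace

end IdealCount

section PolynomialGrowth

open Asymptotics Filter Metric

/-- `F` grows at most polynomially on `S`: there is an exponent `k` with
`F s = O((1 + ‖s‖) ^ k)` uniformly for `s ∈ S`. -/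
def HasPolyGrowthOn (F : ℂ → ℂ) (S : Set ℂ) : Prop :=
  ∃ k : ℕ, F =O[𝓟 S] fun s ↦ (1 + ‖s‖) ^ k

/-- `F` decays on `S` faster than every power: `F s = O((1 + ‖s‖) ^ (-n))` uniformly for `s ∈ S`,
for each exponent `n`. -/
def HasRapidDecayOn (F : ℂ → ℂ) (S : Set ℂ) : Prop :=
  ∀ n : ℕ, F =O[𝓟 S] fun s ↦ ((1 + ‖s‖) ^ n)⁻¹

variable {F G : ℂ → ℂ} {S T : Set ℂ}

theorem norm_one_add_norm_pow (s : ℂ) (k : ℕ) : ‖(1 + ‖s‖) ^ k‖ = (1 + ‖s‖) ^ k :=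
  Real.norm_of_nonneg (by positivity)

theorem isBigO_one_add_norm_pow_of_le {k l : ℕ} (h : k ≤ l) (S : Set ℂ) :
    (fun s : ℂ ↦ (1 + ‖s‖) ^ k) =O[𝓟 S] fun s ↦ (1 + ‖s‖) ^ l :=
  isBigO_of_le _ fun s ↦ by
    rw [norm_one_add_norm_pow, norm_one_add_norm_pow]
    exact pow_le_pow_right₀ (le_add_of_nonneg_right (norm_nonneg s)) h

theorem one_add_norm_le_two_mul_of_mem_closedBall {r : ℝ} {s z : ℂ} (hr : r ≤ 1)
    (hz : z ∈ closedBall s r) : 1 + ‖z‖ ≤ 2 * (1 + ‖s‖) := by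
  linarith [norm_le_norm_add_norm_sub' z s, mem_closedBall_iff_norm.1 hz, norm_nonneg s]

namespace HasPolyGrowthOn

theorem of_norm_le {B : ℝ} (k : ℕ) (h : ∀ s ∈ S, ‖F s‖ ≤ B * (1 + ‖s‖) ^ k) :
    HasPolyGrowthOn F S :=
  ⟨k, isBigO_principal.2 ⟨B, fun s hs ↦ by simpa only [norm_one_add_norm_pow] using h s hs⟩⟩

theorem exists_pos_norm_le (h : HasPolyGrowthOn F S) :
    ∃ B > 0, ∃ k : ℕ, ∀ s ∈ S, ‖F s‖ ≤ B * (1 + ‖s‖) ^ k := by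
  obtain ⟨k, hk⟩ := h
  obtain ⟨B, hB, hk⟩ := hk.exists_pos
  refine ⟨B, hB, k, fun s hs ↦ ?_⟩
  simpa only [norm_one_add_norm_pow] using isBigOWith_principal.1 hk s hs

theorem mono (h : HasPolyGrowthOn F S) (hTS : T ⊆ S) : HasPolyGrowthOn F T :=
  h.imp fun _ hk ↦ hk.mono (principal_mono.2 hTS)

theorem congr (h : HasPolyGrowthOn F S) (hFG : Set.EqOn F G S) : HasPolyGrowthOn G S :=
  h.imp fun _ hk ↦ hk.congr' (eventuallyEq_principal.2 hFG) (EventuallyEq.refl _ _)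

theorem const (c : ℂ) (S : Set ℂ) : HasPolyGrowthOn (fun _ ↦ c) S :=
  .of_norm_le (B := ‖c‖) 0 fun _ _ ↦ by simp

theorem id (S : Set ℂ) : HasPolyGrowthOn (fun s ↦ s) S :=
  .of_norm_le (B := 1) 1 fun _ _ ↦ by simp

theorem neg (hF : HasPolyGrowthOn F S) : HasPolyGrowthOn (fun s ↦ -F s) S :=
  hF.imp fun _ hk ↦ hk.neg_left

theorem add (hF : HasPolyGrowthOn F S) (hG : HasPolyGrowthOn G S) :
    HasPolyGrowthOn (fun s ↦ F s + G s) S := by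
  obtain ⟨k, hk⟩ := hF
  obtain ⟨l, hl⟩ := hG
  exact ⟨max k l, (hk.trans (isBigO_one_add_norm_pow_of_le (le_max_left k l) S)).add
    (hl.trans (isBigO_one_add_norm_pow_of_le (le_max_right k l) S))⟩

theorem sub (hF : HasPolyGrowthOn F S) (hG : HasPolyGrowthOn G S) :
    HasPolyGrowthOn (fun s ↦ F s - G s) S := by
  simpa only [sub_eq_add_neg] using hF.add hG.neg

theorem mul (hF : HasPolyGrowthOn F S) (hG : HasPolyGrowthOn G S) :
    HasPolyGrowthOn (fun s ↦ F s * G s) S := by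
  obtain ⟨k, hk⟩ := hF
  obtain ⟨l, hl⟩ := hG
  exact ⟨k + l, by simpa only [pow_add] using hk.mul hl⟩

theorem union (hS : HasPolyGrowthOn F S) (hT : HasPolyGrowthOn F T) :
    HasPolyGrowthOn F (S ∪ T) := by
  obtain ⟨k, hk⟩ := hS
  obtain ⟨l, hl⟩ := hT
  refine ⟨max k l, ?_⟩
  rw [← sup_principal]
  exact (hk.trans (isBigO_one_add_norm_pow_of_le (le_max_left k l) S)).sup
    (hl.trans (isBigO_one_add_norm_pow_of_le (le_max_right k l) T))

theorem deriv {r : ℝ} (hF : HasPolyGrowthOn F S) (hd : DifferentiableOn ℂ F S) (hr : 0 < r)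
    (hr₁ : r ≤ 1) (hTS : ∀ s ∈ T, closedBall s r ⊆ S) : HasPolyGrowthOn (deriv F) T := by
  obtain ⟨B, hB, k, hk⟩ := hF.exists_pos_norm_le
  refine .of_norm_le (B := B * 2 ^ k / r) k fun s hs ↦ ?_
  calc ‖_root_.deriv F s‖ ≤ B * (2 * (1 + ‖s‖)) ^ k / r := by
        refine Complex.norm_deriv_le_of_forall_mem_sphere_norm_le hr
          (hd.mono (closure_ball_subset_closedBall.trans (hTS s hs))).diffContOnCl fun z hz ↦ ?_
        have hz := sphere_subset_closedBall hz
        refine (hk z (hTS s hs hz)).trans ?_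
        gcongr
        exact one_add_norm_le_two_mul_of_mem_closedBall hr₁ hz
    _ = B * 2 ^ k / r * (1 + ‖s‖) ^ k := by rw [mul_pow]; ring

theorem deriv_of_re_gt {θ a : ℝ} (hF : ∀ b, θ < b → HasPolyGrowthOn F {s | b ≤ s.re})
    (hd : DifferentiableOn ℂ F {s | θ < s.re}) (ha : θ < a) :
    HasPolyGrowthOn (_root_.deriv F) {s | a ≤ s.re} := by
  obtain ⟨b, hθb, hba⟩ := exists_between ha
  refine (hF b hθb).deriv (hd.mono fun s hs ↦ hθb.trans_le hs)
    (lt_min one_pos (sub_pos.2 hba)) (min_le_left _ _) fun s hs z hz ↦ ?_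
  have hre := ((Complex.abs_re_le_norm (z - s)).trans (mem_closedBall_iff_norm.1 hz)).trans
    (min_le_right _ _)
  rw [Complex.sub_re, abs_le] at hre
  exact (by linarith [hre.1, Set.mem_ofPred.1 hs] : b ≤ z.re)

end HasPolyGrowthOn

namespace HasRapidDecayOn

theorem mono (h : HasRapidDecayOn F S) (hTS : T ⊆ S) : HasRapidDecayOn F T :=
  fun n ↦ (h n).mono (principal_mono.2 hTS)

theorem exists_pos_norm_le (h : HasRapidDecayOn F S) (n : ℕ) :
    ∃ B > 0, ∀ s ∈ S, ‖F s‖ ≤ B / (1 + ‖s‖) ^ n := by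
  obtain ⟨B, hB, hn⟩ := (h n).exists_pos
  refine ⟨B, hB, fun s hs ↦ ?_⟩
  simpa only [norm_inv, norm_one_add_norm_pow, div_eq_mul_inv] using isBigOWith_principal.1 hn s hs

theorem of_norm_le (h : ∀ n : ℕ, ∃ B, ∀ s ∈ S, ‖F s‖ ≤ B / (1 + ‖s‖) ^ n) :
    HasRapidDecayOn F S := fun n ↦ by
  obtain ⟨B, hB⟩ := h n
  refine isBigO_principal.2 ⟨B, fun s hs ↦ ?_⟩
  simpa only [norm_inv, norm_one_add_norm_pow, div_eq_mul_inv] using hB s hs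

theorem congr (h : HasRapidDecayOn F S) (hFG : Set.EqOn F G S) : HasRapidDecayOn G S :=
  fun n ↦ (h n).congr' (eventuallyEq_principal.2 hFG) (EventuallyEq.refl _ _)

theorem add (hF : HasRapidDecayOn F S) (hG : HasRapidDecayOn G S) :
    HasRapidDecayOn (fun s ↦ F s + G s) S := fun n ↦ (hF n).add (hG n)

theorem polyGrowth_mul (hF : HasPolyGrowthOn F S) (hG : HasRapidDecayOn G S) :
    HasRapidDecayOn (fun s ↦ F s * G s) S := fun n ↦ by
  obtain ⟨k, hk⟩ := hF
  refine (hk.mul (hG (k + n))).congr_right fun s ↦ ?_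
  rw [pow_add, mul_inv, mul_inv_cancel_left₀ (by positivity)]

theorem deriv {r : ℝ} (hF : HasRapidDecayOn F S) (hd : DifferentiableOn ℂ F S) (hr : 0 < r)
    (hr₁ : r ≤ 1) (hTS : ∀ s ∈ T, closedBall s r ⊆ S) : HasRapidDecayOn (deriv F) T := by
  refine .of_norm_le fun n ↦ ?_
  obtain ⟨B, hB, hn⟩ := hF.exists_pos_norm_le n
  refine ⟨B * 2 ^ n / r, fun s hs ↦ ?_⟩
  calc ‖_root_.deriv F s‖ ≤ B / ((1 + ‖s‖) / 2) ^ n / r := by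
        refine Complex.norm_deriv_le_of_forall_mem_sphere_norm_le hr
          (hd.mono (closure_ball_subset_closedBall.trans (hTS s hs))).diffContOnCl fun z hz ↦ ?_
        have hz := sphere_subset_closedBall hz
        refine (hn z (hTS s hs hz)).trans ?_
        gcongr
        rw [mem_closedBall_comm] at hz
        linarith [one_add_norm_le_two_mul_of_mem_closedBall hr₁ hz]
    _ = B * 2 ^ n / r / (1 + ‖s‖) ^ n := by rw [div_pow]; field_simp

end HasRapidDecayOn

end PolynomialGrowth

section AbelSummation

open MeasureTheory Set

section RemainderIntegral

variable {E : ℝ → ℂ} {C θ : ℝ}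

theorem norm_mul_cpow_le_of_norm_le_rpow (hE : ∀ t, 1 < t → ‖E t‖ ≤ C * t ^ θ) (s : ℂ) {t : ℝ}
    (ht : t ∈ Ioi (1 : ℝ)) : ‖E t * (t : ℂ) ^ (-(s + 1))‖ ≤ C * t ^ (θ - s.re - 1) := by
  have ht₀ : 0 < t := one_pos.trans ht
  calc ‖E t * (t : ℂ) ^ (-(s + 1))‖ = ‖E t‖ * t ^ (-s.re - 1) := by
        rw [norm_mul, Complex.norm_cpow_eq_rpow_re_of_pos ht₀]
        congr 2
        rw [Complex.neg_re, Complex.add_re, Complex.one_re, neg_add']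
    _ ≤ C * t ^ θ * t ^ (-s.re - 1) := by gcongr; exact hE t ht
    _ = C * t ^ (θ - s.re - 1) := by rw [mul_assoc, ← Real.rpow_add ht₀]; ring_nf

theorem integrableOn_Ioi_mul_rpow {s : ℂ} (C : ℝ) (hs : θ < s.re) :
    IntegrableOn (fun t : ℝ ↦ C * t ^ (θ - s.re - 1)) (Ioi 1) :=
  (integrableOn_Ioi_rpow_of_lt (by linarith) one_pos).const_mul C

theorem integrableOn_mul_cpow_of_norm_le_rpow (hEm : Measurable E)
    (hE : ∀ t, 1 < t → ‖E t‖ ≤ C * t ^ θ) {s : ℂ} (hs : θ < s.re) :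
    IntegrableOn (fun t : ℝ ↦ E t * (t : ℂ) ^ (-(s + 1))) (Ioi 1) :=
  (integrableOn_Ioi_mul_rpow C hs).mono'
    (hEm.mul (Complex.measurable_ofReal.pow_const _)).aestronglyMeasurable
    ((ae_restrict_mem measurableSet_Ioi).mono fun _ ↦ norm_mul_cpow_le_of_norm_le_rpow hE s)

theorem norm_integral_mul_cpow_le (hE : ∀ t, 1 < t → ‖E t‖ ≤ C * t ^ θ) {s : ℂ}
    (hs : θ < s.re) :
    ‖∫ t in Ioi (1 : ℝ), E t * (t : ℂ) ^ (-(s + 1))‖ ≤ C / (s.re - θ) := by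
  calc ‖∫ t in Ioi (1 : ℝ), E t * (t : ℂ) ^ (-(s + 1))‖
      ≤ ∫ t in Ioi (1 : ℝ), C * t ^ (θ - s.re - 1) :=
        norm_integral_le_of_norm_le (integrableOn_Ioi_mul_rpow C hs)
          ((ae_restrict_mem measurableSet_Ioi).mono fun _ ↦ norm_mul_cpow_le_of_norm_le_rpow hE s)
    _ = C / (s.re - θ) := by
        rw [integral_const_mul, integral_Ioi_rpow_of_lt (by linarith) one_pos, Real.one_rpow,
          sub_add_cancel, neg_div, ← div_neg, neg_sub, mul_one_div]

theorem mellin_indicator_Ioi_one (s : ℂ) :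
    mellin ((Ioi 1).indicator E) (-s) = ∫ t in Ioi (1 : ℝ), E t * (t : ℂ) ^ (-(s + 1)) := by
  have hind (t : ℝ) : (t : ℂ) ^ (-s - 1) • (Ioi 1).indicator E t =
      (Ioi 1).indicator (fun t : ℝ ↦ E t * (t : ℂ) ^ (-(s + 1))) t := by
    rw [← indicator_const_smul_apply, neg_add']
    simp only [smul_eq_mul, indicator_apply, mul_comm]
  simp_rw [mellin, hind, setIntegral_indicator measurableSet_Ioi,
    inter_eq_right.2 (Ioi_subset_Ioi zero_le_one)]

theorem differentiableAt_integral_mul_cpow (hEm : Measurable E)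
    (hE : ∀ t, 1 < t → ‖E t‖ ≤ C * t ^ θ) {s : ℂ} (hs : θ < s.re) :
    DifferentiableAt ℂ (fun s ↦ ∫ t in Ioi (1 : ℝ), E t * (t : ℂ) ^ (-(s + 1))) s := by
  simp_rw [← mellin_indicator_Ioi_one]
  have hbound (t : ℝ) : ‖(Ioi 1).indicator E t‖ ≤ ‖C * t ^ θ‖ := by
    by_cases ht : t ∈ Ioi 1
    · rw [indicator_of_mem ht]
      exact (hE t ht).trans (le_abs_self _)
    · rw [indicator_of_notMem ht, norm_zero]
      exact norm_nonneg _
  have hloc : LocallyIntegrableOn ((Ioi 1).indicator E) (Ioi 0) := by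
    suffices LocallyIntegrableOn (fun t : ℝ ↦ C * t ^ θ) (Ioi 0) from
      this.mono (hEm.indicator measurableSet_Ioi).aestronglyMeasurable (.of_forall hbound)
    exact ContinuousOn.locallyIntegrableOn (fun t ht ↦ (continuousAt_const.mul
      (Real.continuousAt_rpow_const t θ (.inl ht.ne'))).continuousWithinAt) measurableSet_Ioi
  refine DifferentiableAt.comp s (g := mellin _) (f := fun s ↦ -s) ?_ differentiableAt_id.neg
  refine mellin_differentiableAt_of_isBigO_rpow (a := -θ) (b := -s.re - 1) hloc
    (.of_bound ‖C‖ (.of_forall fun t ↦ ?_)) (by simpa using hs) (.of_bound 0 ?_) (by simp)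
  · rw [neg_neg, ← norm_mul]
    exact hbound t
  · filter_upwards [Ioo_mem_nhdsGT one_pos] with t ht
    rw [indicator_of_notMem (notMem_Ioi.2 ht.2.le), norm_zero, zero_mul]

end RemainderIntegral

variable {f : ℕ → ℝ} {κ C θ : ℝ}

theorem isBigO_sum_Icc_of_abs_sum_sub_le (hθ : θ ≤ 1)
    (h : ∀ t : ℝ, 1 ≤ t → |∑ k ∈ Finset.Icc 1 ⌊t⌋₊, f k - κ * t| ≤ C * t ^ θ) :
    (fun n : ℕ ↦ ∑ k ∈ Finset.Icc 1 n, f k) =O[Filter.atTop] fun n ↦ (n : ℝ) ^ (1 : ℝ) := by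
  refine .of_bound (|C| + |κ|) ?_
  filter_upwards [Filter.eventually_ge_atTop 1] with n hn
  have hn₁ : (1 : ℝ) ≤ n := by exact_mod_cast hn
  have hsum := h n hn₁
  rw [Nat.floor_natCast] at hsum
  calc ‖∑ k ∈ Finset.Icc 1 n, f k‖
      ≤ ‖∑ k ∈ Finset.Icc 1 n, f k - κ * n‖ + ‖κ * n‖ := norm_le_norm_sub_add _ _
    _ ≤ |C| * n ^ (1 : ℝ) + |κ| * n ^ (1 : ℝ) := by
        gcongr ?_ + ?_
        · exact hsum.trans (by gcongr; exact le_abs_self C)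
        · rw [Real.rpow_one, norm_mul, RCLike.norm_natCast, Real.norm_eq_abs]
    _ = (|C| + |κ|) * ‖(n : ℝ) ^ (1 : ℝ)‖ := by
        rw [Real.norm_of_nonneg (by positivity), add_mul]

theorem LSeriesSummable_of_abs_sum_sub_le (hf : ∀ n, 0 ≤ f n) (hθ : θ ≤ 1)
    (h : ∀ t : ℝ, 1 ≤ t → |∑ k ∈ Finset.Icc 1 ⌊t⌋₊, f k - κ * t| ≤ C * t ^ θ) {s : ℂ}
    (hs : 1 < s.re) : LSeriesSummable (fun n ↦ (f n : ℂ)) s :=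
  LSeriesSummable_of_sum_norm_bigO_and_nonneg (isBigO_sum_Icc_of_abs_sum_sub_le hθ h) hf
    zero_le_one hs

theorem measurable_sum_Icc_floor_sub_mul (f : ℕ → ℝ) (κ : ℝ) :
    Measurable fun t : ℝ ↦ ((∑ k ∈ Finset.Icc 1 ⌊t⌋₊, f k - κ * t : ℝ) : ℂ) :=
  Complex.measurable_ofReal.comp <|
    ((measurable_from_nat (f := fun n ↦ ∑ k ∈ Finset.Icc 1 n, f k)).comp Nat.measurable_floor).sub
      (measurable_const_mul κ)

theorem norm_sum_Icc_floor_sub_mul_le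
    (h : ∀ t : ℝ, 1 ≤ t → |∑ k ∈ Finset.Icc 1 ⌊t⌋₊, f k - κ * t| ≤ C * t ^ θ) (t : ℝ)
    (ht : 1 < t) : ‖((∑ k ∈ Finset.Icc 1 ⌊t⌋₊, f k - κ * t : ℝ) : ℂ)‖ ≤ C * t ^ θ :=
  (Complex.norm_real _).trans_le (h t ht.le)

theorem LSeries_eq_of_abs_sum_sub_le (hf : ∀ n, 0 ≤ f n) (hθ : θ ≤ 1)
    (h : ∀ t : ℝ, 1 ≤ t → |∑ k ∈ Finset.Icc 1 ⌊t⌋₊, f k - κ * t| ≤ C * t ^ θ) {s : ℂ}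
    (hs : 1 < s.re) :
    LSeries (fun n ↦ (f n : ℂ)) s = s * (κ / (s - 1) + ∫ t in Ioi (1 : ℝ),
      ((∑ k ∈ Finset.Icc 1 ⌊t⌋₊, f k - κ * t : ℝ) : ℂ) * (t : ℂ) ^ (-(s + 1))) := by
  have hsplit : EqOn (fun t : ℝ ↦ (∑ k ∈ Finset.Icc 1 ⌊t⌋₊, (f k : ℂ)) * (t : ℂ) ^ (-(s + 1)))
      (fun t : ℝ ↦ κ * (t : ℂ) ^ (-s) +
        ((∑ k ∈ Finset.Icc 1 ⌊t⌋₊, f k - κ * t : ℝ) : ℂ) * (t : ℂ) ^ (-(s + 1))) (Ioi 1) := by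
    intro t ht
    have ht₀ : (t : ℂ) ≠ 0 := Complex.ofReal_ne_zero.2 (one_pos.trans ht).ne'
    have hpow : (t : ℂ) ^ (-s) = t * (t : ℂ) ^ (-(s + 1)) := by
      rw [show -s = 1 + -(s + 1) by ring, Complex.cpow_add _ _ ht₀, Complex.cpow_one]
    push_cast
    rw [hpow]
    ring
  have hs' : (-s).re < -1 := by simpa using hs
  have hmain : ∫ t in Ioi (1 : ℝ), (κ : ℂ) * (t : ℂ) ^ (-s) = κ / (s - 1) := by
    rw [integral_const_mul, integral_Ioi_cpow_of_lt hs' one_pos, Complex.ofReal_one,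
      Complex.one_cpow, neg_add_eq_sub, ← neg_sub s 1, neg_div_neg_eq, mul_one_div]
  rw [LSeries_eq_mul_integral_of_nonneg f zero_le_one hs (isBigO_sum_Icc_of_abs_sum_sub_le hθ h) hf,
    setIntegral_congr_fun measurableSet_Ioi hsplit, integral_add
      ((integrableOn_Ioi_cpow_of_lt hs' one_pos).const_mul _)
      (integrableOn_mul_cpow_of_norm_le_rpow (measurable_sum_Icc_floor_sub_mul f κ)
        (norm_sum_Icc_floor_sub_mul_le h) (by linarith)), hmain]

theorem exists_continuation_sub_one_mul_LSeries (hf : ∀ n, 0 ≤ f n) (hθ : θ ≤ 1)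
    (h : ∀ t : ℝ, 1 ≤ t → |∑ k ∈ Finset.Icc 1 ⌊t⌋₊, f k - κ * t| ≤ C * t ^ θ) :
    ∃ G : ℂ → ℂ, DifferentiableOn ℂ G {s | θ < s.re} ∧ G 1 = κ ∧
      (∀ s : ℂ, 1 < s.re → G s = (s - 1) * LSeries (fun n ↦ (f n : ℂ)) s) ∧
      ∀ a, θ < a → HasPolyGrowthOn G {s | a ≤ s.re} := by
  have hE := norm_sum_Icc_floor_sub_mul_le h
  have hEm := measurable_sum_Icc_floor_sub_mul f κ
  set I : ℂ → ℂ := fun s ↦ ∫ t in Ioi (1 : ℝ),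
    ((∑ k ∈ Finset.Icc 1 ⌊t⌋₊, f k - κ * t : ℝ) : ℂ) * (t : ℂ) ^ (-(s + 1))
  have hL (s : ℂ) (hs : 1 < s.re) : LSeries (fun n ↦ (f n : ℂ)) s = s * (κ / (s - 1) + I s) :=
    LSeries_eq_of_abs_sum_sub_le hf hθ h hs
  have hI (s : ℂ) (hs : θ < s.re) : DifferentiableAt ℂ I s :=
    differentiableAt_integral_mul_cpow hEm hE hs
  have hI_le (s : ℂ) (hs : θ < s.re) : ‖I s‖ ≤ C / (s.re - θ) := norm_integral_mul_cpow_le hE hs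
  clear_value I
  refine ⟨fun s ↦ s * (κ + (s - 1) * I s), fun s hs ↦ ?_, by simp, fun s hs ↦ ?_, fun a ha ↦ ?_⟩
  · refine DifferentiableAt.differentiableWithinAt ?_
    have := hI s hs
    fun_prop
  · have hs₁ : s - 1 ≠ 0 := sub_ne_zero.2 fun h₁ ↦ by simp [h₁] at hs
    rw [hL s hs]
    field_simp
  · refine (HasPolyGrowthOn.id _).mul ((HasPolyGrowthOn.const _ _).add
      (((HasPolyGrowthOn.id _).sub (HasPolyGrowthOn.const _ _)).mul ?_))
    have hC : 0 ≤ C := by simpa using (abs_nonneg _).trans (h 1 le_rfl)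
    refine .of_norm_le (B := C / (a - θ)) 0 fun s (hs : a ≤ s.re) ↦ ?_
    rw [pow_zero, mul_one]
    exact (hI_le s (ha.trans_le hs)).trans
      (div_le_div_of_nonneg_left hC (by linarith) (by linarith))

end AbelSummation

section EulerProduct

open Filter Topology Set

section UniqueFactorization

variable {M F : Type*} [CommMonoidWithZero M] [Subsingleton Mˣ] [NormedField F]

theorem hasSum_indicator_not_dvd [IsCancelMulZero M] (f : M →*₀ F) {Z : F} (hZ : HasSum f Z)
    (S : Finset {p : M // Prime p}) :
    HasSum ({x | ∀ p ∈ S, ¬ p.1 ∣ x}.indicator f) ((∏ p ∈ S, (1 - f p)) * Z) := by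
  classical
  induction S using Finset.induction_on with
  | empty => simpa using hZ
  | insert p S hpS ih =>
    set A : Set M := {x | ∀ p ∈ S, ¬ p.1 ∣ x}
    have hmulA (x : M) : p.1 * x ∈ A ↔ x ∈ A := by
      refine forall₂_congr fun p' hp' ↦ not_congr ⟨fun h ↦ ?_, fun h ↦ h.mul_left _⟩
      refine (p'.2.dvd_or_dvd h).resolve_left fun hdvd ↦ hpS ?_
      have := (p'.2.dvd_prime_iff_associated p.2).1 hdvd
      rwa [← Subtype.ext (associated_iff_eq.1 this)]
    have hmultiples : HasSum ((A ∩ {x | p.1 ∣ x}).indicator f)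
        (f p * ((∏ p ∈ S, (1 - f p)) * Z)) := by
      rw [← (mul_right_injective₀ p.2.ne_zero).hasSum_iff]
      · refine (ih.mul_left (f p)).congr_fun fun x ↦ ?_
        simp [indicator_apply, hmulA]
      · rintro x hx
        exact indicator_of_notMem (fun h ↦ hx (h.2.imp fun _ ↦ Eq.symm)) f
    rw [Finset.prod_insert hpS, mul_assoc, one_sub_mul]
    refine (ih.sub hmultiples).congr_fun fun x ↦ ?_
    by_cases hp : p.1 ∣ x <;> simp [indicator_apply, A, hp]

variable [UniqueFactorizationMonoid M] [CompleteSpace F]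

theorem tendsto_prod_one_sub_mul_tsum (f : M →*₀ F) (hf : Summable fun x ↦ ‖f x‖) :
    Tendsto (fun S : Finset {p : M // Prime p} ↦ (∏ p ∈ S, (1 - f p)) * ∑' x, f x) atTop
      (𝓝 1) := by
  have hlim : Tendsto (fun S : Finset {p : M // Prime p} ↦
      ∑' x, {x | ∀ p ∈ S, ¬ p.1 ∣ x}.indicator f x) atTop
      (𝓝 (∑' x, ({1} : Set M).indicator f x)) := by
    refine tendsto_tsum_of_dominated_convergence hf (fun x ↦ ?_)
      (.of_forall fun S x ↦ norm_indicator_le_norm_self _ _)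
    rcases eq_or_ne x 0 with rfl | hx₀
    · have hzero (A : Set M) : A.indicator f 0 = 0 :=
        indicator_apply_eq_zero.2 fun _ ↦ map_zero f
      simp only [hzero, tendsto_const_nhds]
    rcases eq_or_ne x 1 with rfl | hx₁
    · refine tendsto_const_nhds.congr fun S ↦ ?_
      rw [indicator_of_mem (mem_singleton _), indicator_of_mem]
      exact fun p _ hp ↦ p.2.not_isUnit (isUnit_of_dvd_one hp)
    · obtain ⟨p, hp, hpx⟩ :=
        WfDvdMonoid.exists_irreducible_factor (fun h ↦ hx₁ (isUnit_iff_eq_one.1 h)) hx₀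
      refine tendsto_const_nhds.congr' ?_
      filter_upwards [eventually_ge_atTop {⟨p, hp.prime⟩}] with S hS
      rw [indicator_of_notMem (s := {1}) hx₁, indicator_of_notMem]
      exact fun h ↦ h _ (hS (Finset.mem_singleton_self _)) hpx
  rw [← tsum_subtype, tsum_singleton, map_one] at hlim
  exact hlim.congr fun S ↦ (hasSum_indicator_not_dvd f hf.of_norm.hasSum S).tsum_eq

theorem tsum_ne_zero_of_summable_norm (f : M →*₀ F) (hf : Summable fun x ↦ ‖f x‖) :
    ∑' x, f x ≠ 0 := fun h₀ ↦ by
  have := tendsto_prod_one_sub_mul_tsum f hf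
  simp only [h₀, mul_zero, tendsto_const_nhds_iff, zero_ne_one] at this

theorem hasProd_one_sub_inv_tsum (f : M →*₀ F) (hf : Summable fun x ↦ ‖f x‖) :
    HasProd (fun p : {p : M // Prime p} ↦ 1 - f p) (∑' x, f x)⁻¹ := by
  have := (tendsto_prod_one_sub_mul_tsum f hf).mul_const (∑' x, f x)⁻¹
  simpa only [mul_assoc, mul_inv_cancel₀ (tsum_ne_zero_of_summable_norm f hf), mul_one,
    one_mul, HasProd, SummationFilter.unconditional_filter] using this

end UniqueFactorization

section FiberCount

variable {ι : Type*} {N : ι → ℕ} {s : ℂ}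

theorem tsum_fiber_natCast_cpow (N : ι → ℕ) (hs : s ≠ 0) (n : ℕ) :
    ∑' i : {i // N i = n}, (N i : ℂ) ^ (-s) =
      LSeries.term (fun n ↦ Nat.card {i // N i = n}) s n := by
  rw [LSeries.term_of_ne_zero' hs, tsum_congr fun i : {i // N i = n} ↦ by rw [i.2], tsum_const,
    nsmul_eq_mul, Complex.cpow_neg, div_eq_mul_inv]

theorem tsum_fiber_norm_natCast_cpow (N : ι → ℕ) (hs : s ≠ 0) (n : ℕ) :
    ∑' i : {i // N i = n}, ‖(N i : ℂ) ^ (-s)‖ =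
      ‖LSeries.term (fun n ↦ Nat.card {i // N i = n}) s n‖ := by
  rw [LSeries.term_of_ne_zero' hs, tsum_congr fun i : {i // N i = n} ↦ by rw [i.2], tsum_const,
    nsmul_eq_mul, Complex.cpow_neg, norm_div, norm_inv, RCLike.norm_natCast, div_eq_mul_inv]

theorem summable_norm_natCast_cpow_of_LSeriesSummable_card (hN : ∀ n, Finite {i // N i = n})
    (hs : s ≠ 0) (h : LSeriesSummable (fun n ↦ Nat.card {i // N i = n}) s) :
    Summable fun i ↦ ‖(N i : ℂ) ^ (-s)‖ := by
  refine (Equiv.sigmaFiberEquiv N).summable_iff.1 <|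
    (summable_sigma_of_nonneg fun _ ↦ norm_nonneg _).2 ⟨fun n ↦ ?_,
      h.norm.congr fun n ↦ (tsum_fiber_norm_natCast_cpow N hs n).symm⟩
  have := hN n
  exact .of_finite

theorem tsum_natCast_cpow_eq_LSeries_card (hN : ∀ n, Finite {i // N i = n})
    (hs : s ≠ 0) (h : LSeriesSummable (fun n ↦ Nat.card {i // N i = n}) s) :
    ∑' i, (N i : ℂ) ^ (-s) = LSeries (fun n ↦ Nat.card {i // N i = n}) s := by
  have hsum := (summable_norm_natCast_cpow_of_LSeriesSummable_card hN hs h).of_norm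
  rw [← (Equiv.sigmaFiberEquiv N).summable_iff] at hsum
  rw [← (Equiv.sigmaFiberEquiv N).tsum_eq]
  exact hsum.tsum_sigma.trans (tsum_congr (tsum_fiber_natCast_cpow N hs))

end FiberCount

section DedekindZeta

variable {K : Type*} [Field K] [NumberField K] {s : ℂ}

/-- The completely multiplicative function `I ↦ 𝒩(I) ^ (-s)` on the ideals of `𝓞 K`, vanishing at
`⊥` because `s ≠ 0`. -/
noncomputable def absNormCpowNeg (K : Type*) [Field K] [NumberField K] (hs : s ≠ 0) :
    Ideal (𝓞 K) →*₀ ℂ where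
  toFun I := (Ideal.absNorm I : ℂ) ^ (-s)
  map_zero' := by simp [hs]
  map_one' := by simp
  map_mul' I J := by rw [map_mul, Nat.cast_mul, Complex.natCast_mul_natCast_cpow]

theorem finite_absNorm_fiber (n : ℕ) : Finite {I : Ideal (𝓞 K) // Ideal.absNorm I = n} :=
  (Ideal.finite_setOfPred_absNorm_eq n).to_subtype

theorem summable_norm_absNormCpowNeg (hs : s ≠ 0)
    (h : LSeriesSummable (fun n ↦ Nat.card {I : Ideal (𝓞 K) // Ideal.absNorm I = n}) s) :
    Summable fun I ↦ ‖absNormCpowNeg K hs I‖ :=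
  summable_norm_natCast_cpow_of_LSeriesSummable_card finite_absNorm_fiber hs h

theorem dedekindZeta_ne_zero_of_LSeriesSummable (hs : s ≠ 0)
    (h : LSeriesSummable (fun n ↦ Nat.card {I : Ideal (𝓞 K) // Ideal.absNorm I = n}) s) :
    dedekindZeta K s ≠ 0 := by
  rw [dedekindZeta, ← tsum_natCast_cpow_eq_LSeries_card finite_absNorm_fiber hs h]
  exact tsum_ne_zero_of_summable_norm _ (summable_norm_absNormCpowNeg hs h)

theorem hasProd_one_sub_absNorm_cpow (hs : s ≠ 0)
    (h : LSeriesSummable (fun n ↦ Nat.card {I : Ideal (𝓞 K) // Ideal.absNorm I = n}) s) :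
    HasProd (fun p : {p : Ideal (𝓞 K) // p ≠ ⊥ ∧ p.IsPrime} ↦
      1 - (Ideal.absNorm p.1 : ℂ) ^ (-s)) (dedekindZeta K s)⁻¹ := by
  have hprime (p : Ideal (𝓞 K)) : p ≠ ⊥ ∧ p.IsPrime ↔ Prime p :=
    ⟨fun hp ↦ (Ideal.prime_iff_isPrime hp.1).2 hp.2,
      fun hp ↦ ⟨hp.ne_zero, Ideal.isPrime_of_prime hp⟩⟩
  rw [dedekindZeta, ← tsum_natCast_cpow_eq_LSeries_card finite_absNorm_fiber hs h]
  exact (Equiv.subtypeEquivRight hprime).hasProd_iff.2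
    (hasProd_one_sub_inv_tsum _ (summable_norm_absNormCpowNeg hs h))

end DedekindZeta

end EulerProduct

section ZeroFreeLine

open Filter Topology Metric

section ThreeFourOne

theorem three_add_four_mul_re_add_re_sq_nonneg {z : ℂ} (hz : ‖z‖ = 1) :
    0 ≤ 3 + 4 * z.re + (z ^ 2).re := by
  have hnorm : z.re * z.re + z.im * z.im = 1 := by
    rw [← Complex.normSq_apply, Complex.normSq_eq_norm_sq, hz, one_pow]
  have hre : (z ^ 2).re = z.re * z.re - z.im * z.im := by rw [sq, Complex.mul_re]
  nlinarith [sq_nonneg (z.re + 1)]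

theorem hasSum_neg_log_norm_one_sub {w : ℂ} (hw : ‖w‖ < 1) :
    HasSum (fun n : ℕ ↦ (w ^ n).re / n) (-Real.log ‖1 - w‖) := by
  simpa [Complex.log_re] using Complex.hasSum_re (Complex.hasSum_taylorSeries_neg_log hw)

theorem norm_one_sub_pow_three_mul_pow_four_mul_le_one {a : ℝ} (ha₀ : 0 ≤ a) (ha₁ : a < 1)
    {z : ℂ} (hz : ‖z‖ = 1) :
    ‖1 - (a : ℂ)‖ ^ 3 * ‖1 - a * z‖ ^ 4 * ‖1 - a * z ^ 2‖ ≤ 1 := by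
  have hnorm {w : ℂ} (hw : ‖w‖ = 1) : ‖a * w‖ < 1 := by
    rwa [norm_mul, hw, mul_one, Complex.norm_of_nonneg ha₀]
  have hpos {w : ℂ} (hw : ‖w‖ < 1) : 0 < ‖1 - w‖ :=
    norm_pos_iff.2 (sub_ne_zero.2 fun h ↦ by simp [← h] at hw)
  have h₁ : ‖(a : ℂ)‖ < 1 := by simpa using hnorm norm_one
  have hz₁ := hnorm hz
  have hz₂ : ‖a * z ^ 2‖ < 1 := hnorm (by rw [norm_pow, hz, one_pow])
  have hlog : 0 ≤ 3 * -Real.log ‖1 - (a : ℂ)‖ + 4 * -Real.log ‖1 - a * z‖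
      + -Real.log ‖1 - a * z ^ 2‖ := by
    refine ((((hasSum_neg_log_norm_one_sub h₁).mul_left 3).add
      ((hasSum_neg_log_norm_one_sub hz₁).mul_left 4)).add
      (hasSum_neg_log_norm_one_sub hz₂)).nonneg fun n ↦ ?_
    have hn : 3 * (((a : ℂ) ^ n).re / n) + 4 * (((a * z) ^ n).re / n) + ((a * z ^ 2) ^ n).re / n =
        a ^ n / n * (3 + 4 * (z ^ n).re + ((z ^ n) ^ 2).re) := by
      simp only [mul_pow, ← Complex.ofReal_pow, Complex.re_ofReal_mul, Complex.ofReal_re, ← pow_mul,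
        mul_comm 2 n]
      ring
    rw [hn]
    exact mul_nonneg (by positivity)
      (three_add_four_mul_re_add_re_sq_nonneg (by rw [norm_pow, hz, one_pow]))
  have h₁' := hpos h₁
  have hz₁' := hpos hz₁
  have hz₂' := hpos hz₂
  refine (Real.log_nonpos_iff (by positivity)).1 ?_
  rw [Real.log_mul (by positivity) hz₂'.ne', Real.log_mul (by positivity) (by positivity),
    Real.log_pow, Real.log_pow]
  push_cast
  linarith

theorem one_le_norm_pow_three_mul_pow_four_mul_of_hasProd {ι : Type*} {q : ι → ℝ}
    (hq : ∀ i, 1 < q i) {Z : ℂ → ℂ} (hZ : ∀ s : ℂ, 1 < s.re → Z s ≠ 0)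
    (hprod : ∀ s : ℂ, 1 < s.re → HasProd (fun i ↦ 1 - (q i : ℂ) ^ (-s)) (Z s)⁻¹)
    {s : ℂ} (hs : 1 < s.re) :
    1 ≤ ‖Z s.re‖ ^ 3 * ‖Z s‖ ^ 4 * ‖Z (s.re + 2 * (s.im * Complex.I))‖ := by
  have hs₀ : 1 < (s.re : ℂ).re := by simpa using hs
  have hs₂ : 1 < ((s.re : ℂ) + 2 * (s.im * Complex.I)).re := by simpa using hs
  have hle : ‖(Z s.re)⁻¹‖ ^ 3 * ‖(Z s)⁻¹‖ ^ 4 * ‖(Z (s.re + 2 * (s.im * Complex.I)))⁻¹‖ ≤ 1 := by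
    refine le_of_tendsto ((((hprod _ hs₀).norm.pow 3).mul ((hprod _ hs).norm.pow 4)).mul
      (hprod _ hs₂).norm) (.of_forall fun S ↦ ?_)
    refine Finset.prod_le_one (fun i _ ↦ by positivity) fun i _ ↦ ?_
    have hq₀ : 0 < q i := one_pos.trans (hq i)
    have hqc : (q i : ℂ) ≠ 0 := Complex.ofReal_ne_zero.2 hq₀.ne'
    have hre : ((q i ^ (-s.re) : ℝ) : ℂ) = (q i : ℂ) ^ (-(s.re : ℂ)) := by
      rw [Complex.ofReal_cpow hq₀.le, Complex.ofReal_neg]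
    have hnorm : ‖(q i : ℂ) ^ (-(s.im * Complex.I))‖ = 1 := by
      simp [Complex.norm_cpow_eq_rpow_re_of_pos hq₀]
    have h := norm_one_sub_pow_three_mul_pow_four_mul_le_one (by positivity)
      (Real.rpow_lt_one_of_one_lt_of_neg (hq i) (by linarith : -s.re < 0)) hnorm
    rwa [hre, ← Complex.cpow_nat_mul, ← Complex.cpow_add _ _ hqc, ← Complex.cpow_add _ _ hqc,
      mul_neg, ← neg_add, ← neg_add, Nat.cast_ofNat, Complex.re_add_im] at h
  have hZ₀ := norm_pos_iff.2 (hZ _ hs₀)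
  have hZ₁ := norm_pos_iff.2 (hZ _ hs)
  have hZ₂ := norm_pos_iff.2 (hZ _ hs₂)
  rwa [norm_inv, norm_inv, norm_inv, inv_pow, inv_pow, ← mul_inv, ← mul_inv,
    inv_le_one₀ (by positivity)] at hle

end ThreeFourOne

theorem exists_pos_div_pow_le_of_forall_pow_three_le {c M : ℝ} (hc : 0 < c) (hM : 0 < M)
    (k m : ℕ) :
    ∃ b > 0, ∃ l : ℕ, ∀ T y : ℝ, 1 ≤ T → (∀ η ∈ Set.Ioc (0 : ℝ) 1, ∃ x,
      0 ≤ x ∧ c * η ^ 3 ≤ T ^ k * x ^ 4 ∧ x ≤ y + M * T ^ m * η) → b / T ^ l ≤ y := by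
  set a := min 1 c
  set e := min 1 (a / (2 * M))
  have ha : 0 < a := by positivity
  have he : 0 < e := by positivity
  refine ⟨a / 2 * e ^ 3, by positivity, k + 3 * (k + m), fun T y hT h ↦ ?_⟩
  have : 0 < T := by positivity
  -- The fourth power clears the exponent `3 / 4` that optimising over `η` would produce.
  set ε := e / T ^ (k + m) with hε_def
  have hε : 0 < ε := by positivity
  have hε₁ : ε ≤ 1 := div_le_one_of_le₀ ((min_le_left _ _).trans (one_le_pow₀ hT)) (by positivity)
  obtain ⟨x, hx₀, hx, hxy⟩ := h (ε ^ 4) ⟨by positivity, pow_le_one₀ hε.le hε₁⟩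
  have hx_ge : a * ε ^ 3 / T ^ k ≤ x := by
    refine le_of_pow_le_pow_left₀ four_ne_zero hx₀ ?_
    calc (a * ε ^ 3 / T ^ k) ^ 4 = a ^ 4 * ε ^ 12 / (T ^ k) ^ 4 := by ring
      _ ≤ c * ε ^ 12 / T ^ k := by
          gcongr
          · exact (pow_le_of_le_one ha.le (min_le_left _ _) four_ne_zero).trans (min_le_right _ _)
          · exact le_self_pow₀ (one_le_pow₀ hT) four_ne_zero
      _ ≤ x ^ 4 := by
          rw [div_le_iff₀' (by positivity)]
          rwa [← pow_mul] at hx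
  have hshift : M * T ^ m * ε ^ 4 ≤ a / 2 * ε ^ 3 / T ^ k := by
    calc M * T ^ m * ε ^ 4 = M * e * ε ^ 3 / T ^ k := by
          rw [pow_succ ε 3]; nth_rw 2 [hε_def]; rw [pow_add]; field_simp
      _ ≤ a / 2 * ε ^ 3 / T ^ k := by
          gcongr
          calc M * e ≤ M * (a / (2 * M)) := by gcongr; exact min_le_right _ _
            _ = a / 2 := by field_simp
  calc a / 2 * e ^ 3 / T ^ (k + 3 * (k + m)) = a / 2 * ε ^ 3 / T ^ k := by
        rw [hε_def, div_pow, pow_add T k, ← pow_mul, mul_comm (k + m) 3]; field_simp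
    _ = a * ε ^ 3 / T ^ k - a / 2 * ε ^ 3 / T ^ k := by ring
    _ ≤ y := by linarith

variable {Z G : ℂ → ℂ}

theorem exists_pow_three_mul_le_pow_four (hG : HasPolyGrowthOn G {s | 1 < s.re})
    (hGZ : ∀ s : ℂ, 1 < s.re → G s = (s - 1) * Z s)
    (hZ : ∀ s : ℂ, 1 < s.re → 1 ≤ ‖Z s.re‖ ^ 3 * ‖Z s‖ ^ 4 * ‖Z (s.re + 2 * (s.im * Complex.I))‖) :
    ∃ c > 0, ∃ k : ℕ, ∀ s : ℂ, 1 < s.re →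
      c * ((s.re - 1) ^ 3 * ‖s - 1‖ ^ 5) ≤ (1 + ‖s‖) ^ k * ‖G s‖ ^ 4 := by
  obtain ⟨B, hB, k, hk⟩ := hG.exists_pos_norm_le
  refine ⟨(B ^ 4 * 2 ^ k)⁻¹, by positivity, 4 * k, fun s hs ↦ ?_⟩
  set s₂ : ℂ := s.re + 2 * (s.im * Complex.I) with hs₂_def
  have hre₂ : s₂.re = s.re := by simp [hs₂_def]
  have him₂ : s₂.im = 2 * s.im := by simp [hs₂_def]
  have hs₀ : 1 < (s.re : ℂ).re := by simpa using hs
  have hs₂ : 1 < s₂.re := by rwa [hre₂]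
  have hsub₀ : ‖(s.re : ℂ) - 1‖ = s.re - 1 := by
    rw [← Complex.ofReal_one, ← Complex.ofReal_sub, Complex.norm_of_nonneg (by linarith)]
  have hsub₂ : ‖s - 1‖ ≤ ‖s₂ - 1‖ := by
    rw [← sq_le_sq₀ (norm_nonneg _) (norm_nonneg _), ← Complex.normSq_eq_norm_sq,
      ← Complex.normSq_eq_norm_sq, Complex.normSq_apply, Complex.normSq_apply]
    simp only [Complex.sub_re, Complex.sub_im, hre₂, him₂, Complex.one_im]
    nlinarith [sq_nonneg s.im]
  have hG₀ : ‖G s.re‖ ≤ B * (1 + ‖s‖) ^ k := by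
    refine (hk _ hs₀).trans ?_
    gcongr
    rw [Complex.norm_of_nonneg (by linarith)]
    exact Complex.re_le_norm s
  have hG₂ : ‖G s₂‖ ≤ B * (2 * (1 + ‖s‖)) ^ k := by
    refine (hk _ hs₂).trans ?_
    have : s₂ = s + s.im * Complex.I := by
      rw [hs₂_def, two_mul, ← add_assoc, Complex.re_add_im]
    have hle : ‖s₂‖ ≤ ‖s‖ + |s.im| := by
      simpa [this] using norm_add_le s (s.im * Complex.I)
    gcongr
    linarith [Complex.abs_im_le_norm s]
  rw [inv_mul_le_iff₀ (by positivity)]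
  calc (s.re - 1) ^ 3 * ‖s - 1‖ ^ 5 = (s.re - 1) ^ 3 * ‖s - 1‖ ^ 4 * ‖s - 1‖ * 1 := by ring
    _ ≤ (s.re - 1) ^ 3 * ‖s - 1‖ ^ 4 * ‖s₂ - 1‖ * (‖Z s.re‖ ^ 3 * ‖Z s‖ ^ 4 * ‖Z s₂‖) := by
        have : 0 ≤ s.re - 1 := by linarith
        gcongr
        exact hZ s hs
    _ = ‖G s.re‖ ^ 3 * ‖G s‖ ^ 4 * ‖G s₂‖ := by
        rw [hGZ _ hs₀, hGZ s hs, hGZ _ hs₂, norm_mul, norm_mul, norm_mul, hsub₀]; ring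
    _ ≤ (B * (1 + ‖s‖) ^ k) ^ 3 * ‖G s‖ ^ 4 * (B * (2 * (1 + ‖s‖)) ^ k) := by gcongr
    _ = B ^ 4 * 2 ^ k * ((1 + ‖s‖) ^ (4 * k) * ‖G s‖ ^ 4) := by rw [mul_pow 2]; ring

theorem exists_norm_add_sub_le_of_deriv {a : ℝ} (hd : ∀ s : ℂ, a < s.re → DifferentiableAt ℂ G s)
    (hG' : HasPolyGrowthOn (deriv G) {s | a < s.re}) :
    ∃ M > 0, ∃ m : ℕ, ∀ s : ℂ, a < s.re → ∀ η ∈ Set.Icc (0 : ℝ) 1,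
      ‖G (s + η) - G s‖ ≤ M * (1 + ‖s‖) ^ m * η := by
  obtain ⟨M, hM, m, hm⟩ := hG'.exists_pos_norm_le
  refine ⟨M * 2 ^ m, by positivity, m, fun s hs η hη ↦ ?_⟩
  have hmem : s + η ∈ {z : ℂ | a < z.re} ∩ closedBall s 1 := by
    refine ⟨?_, ?_⟩
    · simpa using hs.trans_le (le_add_of_nonneg_right hη.1)
    · simpa [abs_of_nonneg hη.1] using hη.2
  have hconvex := (convex_halfSpace_re_gt a).inter (convex_closedBall s 1)
  have := hconvex.norm_image_sub_le_of_norm_deriv_le (f := G) (C := M * (2 * (1 + ‖s‖)) ^ m)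
    (fun z hz ↦ hd z hz.1) (fun z hz ↦ ?_) ⟨hs, mem_closedBall_self zero_le_one⟩ hmem
  · rw [add_sub_cancel_left, Complex.norm_of_nonneg hη.1] at this
    exact this.trans_eq (by rw [mul_pow]; ring)
  · refine (hm z hz.1).trans ?_
    gcongr
    exact one_add_norm_le_two_mul_of_mem_closedBall le_rfl hz.2

theorem hasPolyGrowthOn_inv_of_le_norm_sub_one {δ : ℝ} (hδ : 0 < δ)
    (hd : ∀ s : ℂ, 1 < s.re → DifferentiableAt ℂ G s) (hG : HasPolyGrowthOn G {s | 1 < s.re})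
    (hG' : HasPolyGrowthOn (deriv G) {s | 1 < s.re})
    (hGZ : ∀ s : ℂ, 1 < s.re → G s = (s - 1) * Z s)
    (hZ : ∀ s : ℂ, 1 < s.re → 1 ≤ ‖Z s.re‖ ^ 3 * ‖Z s‖ ^ 4 * ‖Z (s.re + 2 * (s.im * Complex.I))‖) :
    HasPolyGrowthOn (fun s ↦ (G s)⁻¹) {s | 1 < s.re ∧ δ ≤ ‖s - 1‖} := by
  obtain ⟨c, hc, k, hk⟩ := exists_pow_three_mul_le_pow_four hG hGZ hZ
  obtain ⟨M, hM, m, hm⟩ := exists_norm_add_sub_le_of_deriv hd hG'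
  obtain ⟨b, hb, l, hl⟩ := exists_pos_div_pow_le_of_forall_pow_three_le
    (c := c * δ ^ 5 / 2 ^ k) (by positivity) hM k m
  refine .of_norm_le (B := b⁻¹) l fun s ⟨hs, hsδ⟩ ↦ ?_
  have hT : 1 ≤ 1 + ‖s‖ := le_add_of_nonneg_right (norm_nonneg s)
  suffices h : b / (1 + ‖s‖) ^ l ≤ ‖G s‖ by
    rw [norm_inv]
    refine (inv_anti₀ (by positivity) h).trans_eq ?_
    rw [inv_div, div_eq_inv_mul]
  refine hl _ _ hT fun η hη ↦ ⟨‖G (s + η)‖, norm_nonneg _, ?_, ?_⟩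
  · have hre : (s + η).re = s.re + η := by simp
    have hdist : ‖s - 1‖ ≤ ‖s + η - 1‖ := by
      rw [← sq_le_sq₀ (norm_nonneg _) (norm_nonneg _), ← Complex.normSq_eq_norm_sq,
        ← Complex.normSq_eq_norm_sq, Complex.normSq_apply, Complex.normSq_apply]
      simp only [Complex.sub_re, Complex.sub_im, hre, Complex.add_im, Complex.ofReal_im, add_zero,
        Complex.one_re, Complex.one_im]
      nlinarith [hη.1]
    have hnorm : 1 + ‖s + η‖ ≤ 2 * (1 + ‖s‖) :=
      one_add_norm_le_two_mul_of_mem_closedBall le_rfl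
        (by simpa [abs_of_pos hη.1] using hη.2)
    rw [div_mul_eq_mul_div, div_le_iff₀' (by positivity), ← mul_assoc, ← mul_pow]
    calc c * δ ^ 5 * η ^ 3 = c * (η ^ 3 * δ ^ 5) := by ring
      _ ≤ c * (((s + η).re - 1) ^ 3 * ‖s + η - 1‖ ^ 5) := by
          have hη₀ := hη.1.le
          have hle : η ≤ (s + η).re - 1 := by linarith
          have hnonneg : 0 ≤ (s + η).re - 1 := hη₀.trans hle
          gcongr
          exact hsδ.trans hdist
      _ ≤ (1 + ‖s + η‖) ^ k * ‖G (s + η)‖ ^ 4 := hk _ (by linarith [hη.1])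
      _ ≤ (2 * (1 + ‖s‖)) ^ k * ‖G (s + η)‖ ^ 4 := by gcongr
  · linarith [norm_le_norm_add_norm_sub' (G (s + η)) (G s), hm s hs η ⟨hη.1.le, hη.2⟩]

theorem hasPolyGrowthOn_inv_of_three_four_one (hd : ∀ s : ℂ, 1 ≤ s.re → DifferentiableAt ℂ G s)
    (hG : HasPolyGrowthOn G {s | 1 < s.re}) (hG' : HasPolyGrowthOn (deriv G) {s | 1 < s.re})
    (hG₁ : G 1 ≠ 0) (hGZ : ∀ s : ℂ, 1 < s.re → G s = (s - 1) * Z s)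
    (hZ : ∀ s : ℂ, 1 < s.re → 1 ≤ ‖Z s.re‖ ^ 3 * ‖Z s‖ ^ 4 * ‖Z (s.re + 2 * (s.im * Complex.I))‖) :
    HasPolyGrowthOn (fun s ↦ (G s)⁻¹) {s | 1 < s.re} := by
  have hcont : ContinuousAt (fun s ↦ (G s)⁻¹) 1 := (hd 1 (by simp)).continuousAt.inv₀ hG₁
  obtain ⟨δ, hδ, hnear⟩ := eventually_nhds_iff_ball.1
    (hcont.norm.eventually_lt_const (lt_add_one ‖(G 1)⁻¹‖))
  have hball : HasPolyGrowthOn (fun s ↦ (G s)⁻¹) (ball 1 δ) :=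
    .of_norm_le (B := ‖(G 1)⁻¹‖ + 1) 0 fun s hs ↦ by simpa using (hnear s hs).le
  refine (hball.union (hasPolyGrowthOn_inv_of_le_norm_sub_one hδ (fun s hs ↦ hd s hs.le) hG hG' hGZ
    hZ)).mono fun s hs ↦ ?_
  rcases lt_or_ge ‖s - 1‖ δ with h | h
  · exact .inl (mem_ball_iff_norm.2 h)
  · exact .inr ⟨hs, h⟩

end ZeroFreeLine

section LogDerivative

open Filter Topology Complex

theorem summable_log_mul_rpow_neg {ι : Type*} {q : ι → ℝ} (hq : ∀ i, 1 ≤ q i)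
    (hsum : ∀ σ : ℝ, 1 < σ → Summable fun i ↦ q i ^ (-σ)) {σ : ℝ} (hσ : 1 < σ) :
    Summable fun i ↦ Real.log (q i) * q i ^ (-σ) := by
  obtain ⟨τ, hτ, hτσ⟩ := exists_between hσ
  refine ((hsum τ hτ).mul_right (σ - τ)⁻¹).of_nonneg_of_le
    (fun i ↦ mul_nonneg (Real.log_nonneg (hq i)) (Real.rpow_nonneg (one_pos.trans_le (hq i)).le _))
    fun i ↦ ?_
  have hq₀ : 0 < q i := one_pos.trans_le (hq i)
  calc Real.log (q i) * q i ^ (-σ) ≤ q i ^ (σ - τ) / (σ - τ) * q i ^ (-σ) := by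
        gcongr
        exact Real.log_le_rpow_div hq₀.le (sub_pos.2 hτσ)
    _ = q i ^ (σ - τ + -σ) * (σ - τ)⁻¹ := by rw [Real.rpow_add hq₀]; ring
    _ = q i ^ (-τ) * (σ - τ)⁻¹ := by ring_nf

theorem one_sub_two_rpow_le_norm_one_sub_cpow_neg {q a : ℝ} (hq : 2 ≤ q) (ha : 0 ≤ a) {s : ℂ}
    (hs : a ≤ s.re) : 1 - 2 ^ (-a) ≤ ‖1 - (q : ℂ) ^ (-s)‖ := by
  have hle : ‖(q : ℂ) ^ (-s)‖ ≤ 2 ^ (-a) := by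
    rw [norm_cpow_eq_rpow_re_of_pos (by linarith), neg_re]
    calc q ^ (-s.re) ≤ q ^ (-a) := Real.rpow_le_rpow_of_exponent_le (by linarith) (by linarith)
      _ ≤ 2 ^ (-a) := Real.rpow_le_rpow_of_nonpos two_pos hq (by linarith)
  have := norm_sub_norm_le 1 ((q : ℂ) ^ (-s))
  rw [norm_one] at this
  linarith

theorem one_sub_two_rpow_neg_pos {a : ℝ} (ha : 0 < a) : 0 < 1 - (2 : ℝ) ^ (-a) :=
  sub_pos.2 (Real.rpow_lt_one_of_one_lt_of_neg one_lt_two (neg_neg_of_pos ha))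

theorem one_sub_cpow_neg_ne_zero {q : ℝ} (hq : 2 ≤ q) {s : ℂ} (hs : 0 < s.re) :
    1 - (q : ℂ) ^ (-s) ≠ 0 :=
  norm_pos_iff.1 <| (one_sub_two_rpow_neg_pos hs).trans_le
    (one_sub_two_rpow_le_norm_one_sub_cpow_neg hq hs.le le_rfl)

theorem hasDerivAt_one_sub_cpow_neg {q : ℝ} (hq : 0 < q) (s : ℂ) :
    HasDerivAt (fun z ↦ 1 - (q : ℂ) ^ (-z)) (Real.log q * (q : ℂ) ^ (-s)) s := by
  refine (((hasDerivAt_neg s).const_cpow (c := (q : ℂ))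
    (.inl (ofReal_ne_zero.2 hq.ne'))).const_sub 1).congr_deriv ?_
  rw [ofReal_log hq.le]
  ring

section

variable {ι : Type*} {q : ι → ℝ} (hq : ∀ i, 2 ≤ q i)
  (hsum : ∀ σ : ℝ, 1 < σ → Summable fun i ↦ q i ^ (-σ))
include hq hsum

theorem summable_log_mul_cpow_neg {s : ℂ} (hs : 1 < s.re) :
    Summable fun i ↦ (Real.log (q i) : ℂ) * (q i : ℂ) ^ (-s) := by
  refine .of_norm_bounded
    (summable_log_mul_rpow_neg (fun i ↦ one_le_two.trans (hq i)) hsum hs) fun i ↦ ?_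
  rw [norm_mul, norm_cpow_eq_rpow_re_of_pos (two_pos.trans_le (hq i)), neg_re,
    Complex.norm_of_nonneg (Real.log_nonneg (one_le_two.trans (hq i)))]

theorem summable_log_mul_cpow_neg_div {s : ℂ} (hs : 1 < s.re) :
    Summable fun i ↦ Real.log (q i) * (q i : ℂ) ^ (-s) / (1 - (q i : ℂ) ^ (-s)) := by
  have hs₀ : 0 < s.re := one_pos.trans hs
  refine .of_norm_bounded ((summable_log_mul_cpow_neg hq hsum hs).norm.mul_right
    (1 - 2 ^ (-s.re))⁻¹) fun i ↦ ?_
  rw [norm_div, div_eq_mul_inv]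
  gcongr
  · exact one_sub_two_rpow_neg_pos hs₀
  · exact one_sub_two_rpow_le_norm_one_sub_cpow_neg (hq i) hs₀.le le_rfl

theorem multipliableLocallyUniformlyOn_one_sub_cpow_neg {σ : ℝ} (hσ : 1 < σ) :
    MultipliableLocallyUniformlyOn (fun i (s : ℂ) ↦ 1 - (q i : ℂ) ^ (-s)) {s | σ < s.re} := by
  have hq₀ i : 0 < q i := two_pos.trans_le (hq i)
  simp only [sub_eq_add_neg]
  refine Summable.multipliableLocallyUniformlyOn_one_add (isOpen_re_gt σ) (hsum σ hσ)
    (.of_forall fun i s hs ↦ ?_) fun i ↦ ?_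
  · rw [norm_neg, norm_cpow_eq_rpow_re_of_pos (hq₀ i), neg_re]
    exact Real.rpow_le_rpow_of_exponent_le (one_le_two.trans (hq i)) (neg_le_neg (le_of_lt hs))
  · exact (continuous_neg.const_cpow (.inl (ofReal_ne_zero.2 (hq₀ i).ne'))).neg.continuousOn

theorem logDeriv_eq_neg_tsum_of_hasProd {Z : ℂ → ℂ} (hZ : ∀ s : ℂ, 1 < s.re → Z s ≠ 0)
    (hprod : ∀ s : ℂ, 1 < s.re → HasProd (fun i ↦ 1 - (q i : ℂ) ^ (-s)) (Z s)⁻¹)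
    {s : ℂ} (hs : 1 < s.re) (hd : DifferentiableAt ℂ Z s) :
    logDeriv Z s = -∑' i, Real.log (q i) * (q i : ℂ) ^ (-s) / (1 - (q i : ℂ) ^ (-s)) := by
  obtain ⟨σ, hσ, hσs⟩ := exists_between hs
  have hq₀ i : 0 < q i := two_pos.trans_le (hq i)
  have hfactor i : logDeriv (fun z ↦ 1 - (q i : ℂ) ^ (-z)) s =
      Real.log (q i) * (q i : ℂ) ^ (-s) / (1 - (q i : ℂ) ^ (-s)) := by
    rw [logDeriv_apply, (hasDerivAt_one_sub_cpow_neg (hq₀ i) s).deriv]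
  have hinv : logDeriv (fun z ↦ ∏' i, (1 - (q i : ℂ) ^ (-z))) s = -logDeriv Z s := by
    have hEq : (fun z ↦ ∏' i, (1 - (q i : ℂ) ^ (-z))) =ᶠ[𝓝 s] Inv.inv ∘ Z := by
      filter_upwards [(isOpen_re_gt σ).mem_nhds hσs] with z hz
      exact (hprod z (hσ.trans hz)).tprod_eq
    rw [(logDeriv_congr_nhds hEq).eq_of_nhds, logDeriv_comp (differentiableAt_inv (hZ s hs)) hd,
      logDeriv_inv, logDeriv_apply]
    ring
  rw [eq_neg_iff_add_eq_zero, ← neg_eq_iff_add_eq_zero, ← hinv, logDeriv_tprod_eq_tsum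
    (isOpen_re_gt σ) hσs (fun i ↦ one_sub_cpow_neg_ne_zero (hq i) (one_pos.trans hs))
    (fun i z _ ↦ (hasDerivAt_one_sub_cpow_neg (hq₀ i) z).differentiableAt.differentiableWithinAt)
    (by simpa only [hfactor] using summable_log_mul_cpow_neg_div hq hsum hs)
    (multipliableLocallyUniformlyOn_one_sub_cpow_neg hq hsum hσ)
    ((hprod s hs).tprod_eq.trans_ne (inv_ne_zero (hZ s hs)))]
  exact tsum_congr hfactor

end

/-- The contribution `∑ᵢ log qᵢ ∑_{m ≥ 2} qᵢ ^ (-m s)` of the higher prime powers to minus the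
logarithmic derivative of the Euler product `∏ᵢ (1 - qᵢ ^ (-s))⁻¹`. -/
noncomputable def primePowerTail {ι : Type*} (q : ι → ℝ) (s : ℂ) : ℂ :=
  ∑' i, Real.log (q i) * ((q i : ℂ) ^ (-s)) ^ 2 / (1 - (q i : ℂ) ^ (-s))

section

variable {ι : Type*} {q : ι → ℝ}

theorem norm_log_mul_cpow_neg_sq_div_le {x a : ℝ} (hx : 2 ≤ x) (ha : 0 < a) {s : ℂ}
    (hs : a ≤ s.re) : ‖Real.log x * ((x : ℂ) ^ (-s)) ^ 2 / (1 - (x : ℂ) ^ (-s))‖ ≤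
      Real.log x * x ^ (-(2 * a)) * (1 - 2 ^ (-a))⁻¹ := by
  have hx₀ : 0 < x := by linarith
  have hx₁ : 1 ≤ x := by linarith
  have hlog : 0 ≤ Real.log x := Real.log_nonneg hx₁
  rw [norm_div, norm_mul, Complex.norm_of_nonneg hlog, norm_pow, norm_cpow_eq_rpow_re_of_pos hx₀,
    ← Real.rpow_mul_natCast hx₀.le, div_eq_mul_inv, neg_re, Nat.cast_two]
  gcongr
  · linarith
  · exact one_sub_two_rpow_neg_pos ha
  · exact one_sub_two_rpow_le_norm_one_sub_cpow_neg hx ha.le hs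

variable (hq : ∀ i, 2 ≤ q i) (hsum : ∀ σ : ℝ, 1 < σ → Summable fun i ↦ q i ^ (-σ))
include hq hsum

theorem summable_log_mul_rpow_neg_two_mul {a : ℝ} (ha : 1 / 2 < a) :
    Summable fun i ↦ Real.log (q i) * q i ^ (-(2 * a)) * (1 - 2 ^ (-a))⁻¹ :=
  (summable_log_mul_rpow_neg (fun i ↦ one_le_two.trans (hq i)) hsum (by linarith)).mul_right _

theorem differentiableOn_primePowerTail :
    DifferentiableOn ℂ (primePowerTail q) {s | 1 / 2 < s.re} := by
  intro s hs
  obtain ⟨a, ha, has⟩ := exists_between (Set.mem_ofPred.1 hs)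
  have ha₀ : 0 < a := by linarith
  refine DifferentiableAt.differentiableWithinAt <| DifferentiableOn.differentiableAt
    (differentiableOn_tsum_of_summable_norm (summable_log_mul_rpow_neg_two_mul hq hsum ha)
      (fun i z hz ↦ DifferentiableAt.differentiableWithinAt ?_) (isOpen_re_gt a)
      fun i z hz ↦ norm_log_mul_cpow_neg_sq_div_le (hq i) ha₀ (le_of_lt hz))
    ((isOpen_re_gt a).mem_nhds has)
  have hqc : (q i : ℂ) ≠ 0 := ofReal_ne_zero.2 (two_pos.trans_le (hq i)).ne'
  have hpow : DifferentiableAt ℂ (fun z : ℂ ↦ (q i : ℂ) ^ (-z)) z :=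
    differentiable_neg.differentiableAt.const_cpow (.inl hqc)
  exact ((hpow.pow 2).const_mul _).div (hpow.const_sub 1)
    (one_sub_cpow_neg_ne_zero (hq i) (ha₀.trans hz))

theorem hasPolyGrowthOn_primePowerTail {a : ℝ} (ha : 1 / 2 < a) :
    HasPolyGrowthOn (primePowerTail q) {s | a ≤ s.re} :=
  .of_norm_le 0 fun s hs ↦ by
    rw [pow_zero, mul_one]
    exact tsum_of_norm_bounded (summable_log_mul_rpow_neg_two_mul hq hsum ha).hasSum
      fun i ↦ norm_log_mul_cpow_neg_sq_div_le (hq i) (by linarith) hs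

theorem tsum_log_mul_cpow_neg_div {s : ℂ} (hs : 1 < s.re) :
    ∑' i, Real.log (q i) * (q i : ℂ) ^ (-s) / (1 - (q i : ℂ) ^ (-s)) =
      ∑' i, Real.log (q i) * (q i : ℂ) ^ (-s) + primePowerTail q s := by
  have htail : Summable fun i ↦
      Real.log (q i) * ((q i : ℂ) ^ (-s)) ^ 2 / (1 - (q i : ℂ) ^ (-s)) :=
    .of_norm_bounded (summable_log_mul_rpow_neg_two_mul hq hsum (by linarith)) fun i ↦
      norm_log_mul_cpow_neg_sq_div_le (hq i) (by linarith) le_rfl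
  rw [primePowerTail, ← (summable_log_mul_cpow_neg hq hsum hs).tsum_add htail]
  refine tsum_congr fun i ↦ ?_
  have := one_sub_cpow_neg_ne_zero (hq i) (one_pos.trans hs)
  field_simp
  ring

theorem tsum_log_mul_cpow_neg_eq {Z G : ℂ → ℂ} (hZ : ∀ s : ℂ, 1 < s.re → Z s ≠ 0)
    (hprod : ∀ s : ℂ, 1 < s.re → HasProd (fun i ↦ 1 - (q i : ℂ) ^ (-s)) (Z s)⁻¹)
    (hGZ : ∀ s : ℂ, 1 < s.re → G s = (s - 1) * Z s) {s : ℂ} (hs : 1 < s.re)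
    (hd : DifferentiableAt ℂ G s) :
    ∑' i, Real.log (q i) * (q i : ℂ) ^ (-s) =
      1 / (s - 1) + (-logDeriv G s - primePowerTail q s) := by
  have hsub {z : ℂ} (hz : 1 < z.re) : z - 1 ≠ 0 := sub_ne_zero.2 fun h ↦ by simp [h] at hz
  have hmem := (isOpen_re_gt 1).mem_nhds hs
  have hGZ' : G =ᶠ[𝓝 s] fun z ↦ (z - 1) * Z z := by filter_upwards [hmem] with z hz using hGZ z hz
  have hZG : Z =ᶠ[𝓝 s] fun z ↦ G z / (z - 1) := by
    filter_upwards [hmem] with z hz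
    rw [hGZ z hz, mul_div_cancel_left₀ _ (hsub hz)]
  have hid : DifferentiableAt ℂ (fun z ↦ z - 1) s := differentiableAt_id.sub_const 1
  have hdZ : DifferentiableAt ℂ Z s :=
    (hd.fun_div hid (hsub hs)).congr_of_eventuallyEq hZG
  have hlog : logDeriv G s = 1 / (s - 1) + logDeriv Z s := by
    rw [(logDeriv_congr_nhds hGZ').eq_of_nhds,
      logDeriv_mul s (hsub hs) (hZ s hs) hid hdZ, logDeriv_apply]
    simp
  rw [logDeriv_eq_neg_tsum_of_hasProd hq hsum hZ hprod hs hdZ, tsum_log_mul_cpow_neg_div hq hsum hs]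
    at hlog
  rw [hlog]
  ring

end

theorem hasDerivAt_logDeriv {G : ℂ → ℂ} {s : ℂ} (hd : DifferentiableAt ℂ G s)
    (hd' : DifferentiableAt ℂ (deriv G) s) (hG : G s ≠ 0) :
    HasDerivAt (logDeriv G) (deriv (deriv G) s * (G s)⁻¹ - logDeriv G s * logDeriv G s) s := by
  refine (hd'.hasDerivAt.div hd.hasDerivAt hG).congr_deriv ?_
  rw [logDeriv_apply]
  field_simp

theorem HasPolyGrowthOn.logDeriv {G : ℂ → ℂ} {S : Set ℂ} (hG' : HasPolyGrowthOn (_root_.deriv G) S)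
    (hInv : HasPolyGrowthOn (fun s ↦ (G s)⁻¹) S) : HasPolyGrowthOn (logDeriv G) S :=
  (hG'.mul hInv).congr fun _ _ ↦ (div_eq_mul_inv _ _).symm

theorem HasPolyGrowthOn.deriv_logDeriv {G : ℂ → ℂ} {S : Set ℂ}
    (hd : ∀ s ∈ S, DifferentiableAt ℂ G s) (hd' : ∀ s ∈ S, DifferentiableAt ℂ (_root_.deriv G) s)
    (hne : ∀ s ∈ S, G s ≠ 0) (hG' : HasPolyGrowthOn (_root_.deriv G) S)
    (hG'' : HasPolyGrowthOn (_root_.deriv (_root_.deriv G)) S)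
    (hInv : HasPolyGrowthOn (fun s ↦ (G s)⁻¹) S) :
    HasPolyGrowthOn (_root_.deriv (_root_.logDeriv G)) S :=
  ((hG''.mul hInv).sub ((hG'.logDeriv hInv).mul (hG'.logDeriv hInv))).congr fun s hs ↦
    (hasDerivAt_logDeriv (hd s hs) (hd' s hs) (hne s hs)).deriv.symm

theorem exists_tsum_log_mul_cpow_neg_eq_add {ι : Type*} {q : ι → ℝ} (hq : ∀ i, 2 ≤ q i)
    (hsum : ∀ σ : ℝ, 1 < σ → Summable fun i ↦ q i ^ (-σ)) {Z G : ℂ → ℂ} {θ : ℝ} (hθ : θ < 1)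
    (hd : DifferentiableOn ℂ G {s | θ < s.re})
    (hG : ∀ a, θ < a → HasPolyGrowthOn G {s | a ≤ s.re}) (hG₁ : G 1 ≠ 0)
    (hGZ : ∀ s : ℂ, 1 < s.re → G s = (s - 1) * Z s) (hZ : ∀ s : ℂ, 1 < s.re → Z s ≠ 0)
    (hprod : ∀ s : ℂ, 1 < s.re → HasProd (fun i ↦ 1 - (q i : ℂ) ^ (-s)) (Z s)⁻¹) :
    ∃ H : ℂ → ℂ, DifferentiableOn ℂ H {s | 1 < s.re} ∧
      HasPolyGrowthOn H {s | 1 < s.re} ∧ HasPolyGrowthOn (deriv H) {s | 1 < s.re} ∧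
      ∀ s : ℂ, 1 < s.re → ∑' i, Real.log (q i) * (q i : ℂ) ^ (-s) = 1 / (s - 1) + H s := by
  have hsub : {s : ℂ | 1 < s.re} ⊆ {s | 1 ≤ s.re} := fun s hs ↦ (le_of_lt hs : 1 ≤ s.re)
  have hd' := hd.deriv (isOpen_re_gt θ)
  have hdG (s : ℂ) (hs : 1 ≤ s.re) : DifferentiableAt ℂ G s :=
    hd.differentiableAt ((isOpen_re_gt θ).mem_nhds (hθ.trans_le hs))
  have hdG' (s : ℂ) (hs : 1 < s.re) : DifferentiableAt ℂ (deriv G) s :=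
    hd'.differentiableAt ((isOpen_re_gt θ).mem_nhds (hθ.trans hs))
  have hne (s : ℂ) (hs : 1 < s.re) : G s ≠ 0 := by
    rw [hGZ s hs]
    exact mul_ne_zero (sub_ne_zero.2 fun h ↦ by simp [h] at hs) (hZ s hs)
  have hdR' := differentiableOn_primePowerTail hq hsum
  have hdR (s : ℂ) (hs : 1 < s.re) : DifferentiableAt ℂ (primePowerTail q) s :=
    hdR'.differentiableAt ((isOpen_re_gt _).mem_nhds (one_half_lt_one.trans hs))
  have hderiv (a : ℝ) (ha : θ < a) := HasPolyGrowthOn.deriv_of_re_gt hG hd ha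
  have hG' := (hderiv 1 hθ).mono hsub
  have hG'' := (HasPolyGrowthOn.deriv_of_re_gt hderiv hd' hθ).mono hsub
  have hR (a : ℝ) (ha : 1 / 2 < a) := hasPolyGrowthOn_primePowerTail hq hsum ha
  have hR' := (HasPolyGrowthOn.deriv_of_re_gt hR hdR' one_half_lt_one).mono hsub
  have hInv := hasPolyGrowthOn_inv_of_three_four_one hdG ((hG 1 hθ).mono hsub) hG' hG₁ hGZ
    fun s hs ↦ one_le_norm_pow_three_mul_pow_four_mul_of_hasProd
      (fun i ↦ one_lt_two.trans_le (hq i)) hZ hprod hs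
  have hL := HasPolyGrowthOn.deriv_logDeriv (fun s hs ↦ hdG s (hsub hs)) hdG' hne hG' hG'' hInv
  have hdL (s : ℂ) (hs : 1 < s.re) : DifferentiableAt ℂ (logDeriv G) s :=
    (hasDerivAt_logDeriv (hdG s hs.le) (hdG' s hs) (hne s hs)).differentiableAt
  refine ⟨fun s ↦ -logDeriv G s - primePowerTail q s,
    fun s hs ↦ ((hdL s hs).fun_neg.fun_sub (hdR s hs)).differentiableWithinAt,
    (hG'.logDeriv hInv).neg.sub ((hR 1 one_half_lt_one).mono hsub),
    (hL.neg.sub hR').congr fun s hs ↦ ?_,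
    fun s hs ↦ tsum_log_mul_cpow_neg_eq hq hsum hZ hprod hGZ hs (hdG s hs.le)⟩
  exact ((hdL s hs).hasDerivAt.fun_neg.fun_sub (hdR s hs).hasDerivAt).deriv.symm

end LogDerivative

section Gamma

open Complex Metric

theorem norm_Gamma_le_Gamma_re {s : ℂ} (hs : 0 < s.re) : ‖Gamma s‖ ≤ Real.Gamma s.re := by
  rw [Gamma_eq_integral hs, Real.Gamma_eq_integral hs, GammaIntegral]
  refine (MeasureTheory.norm_integral_le_integral_norm _).trans_eq ?_
  refine MeasureTheory.setIntegral_congr_fun measurableSet_Ioi fun x hx ↦ ?_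
  rw [norm_mul, Complex.norm_of_nonneg (Real.exp_pos _).le, norm_cpow_eq_rpow_re_of_pos hx,
    sub_re, one_re]

theorem differentiableAt_Gamma_of_re_pos {s : ℂ} (hs : 0 < s.re) : DifferentiableAt ℂ Gamma s :=
  differentiableAt_Gamma s fun m h ↦ by
    rw [h, neg_re, natCast_re] at hs
    linarith [Nat.cast_nonneg (α := ℝ) m]

theorem exists_norm_Gamma_le {δ : ℝ} (hδ : 0 < δ) (M : ℝ) :
    ∃ B, ∀ s : ℂ, δ ≤ s.re → s.re ≤ M → ‖Gamma s‖ ≤ B := by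
  have hc : ContinuousOn Real.Gamma (Set.Icc δ M) := 
    Real.differentiableOn_Gamma_Ioi.continuousOn.mono fun x hx ↦ hδ.trans_le hx.1
  obtain ⟨B, hB⟩ := isCompact_Icc.exists_bound_of_continuousOn hc
  exact ⟨B, fun s h₁ h₂ ↦ (norm_Gamma_le_Gamma_re (hδ.trans_le h₁)).trans
    ((le_abs_self _).trans (hB s.re ⟨h₁, h₂⟩))⟩

theorem hasRapidDecayOn_Gamma {δ : ℝ} (hδ : 0 < δ) (M : ℝ) :
    HasRapidDecayOn Gamma {s | δ ≤ s.re ∧ s.re ≤ M} := by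
  refine .of_norm_le fun n ↦ ?_
  induction n generalizing M with
  | zero => simpa only [pow_zero, div_one, Set.mem_ofPred, and_imp] using exists_norm_Gamma_le hδ M
  | succ n ih =>
    obtain ⟨B, hB⟩ := ih (M + 1)
    refine ⟨(1 + δ⁻¹) * B, fun s ⟨h₁, h₂⟩ ↦ ?_⟩
    have hs : 0 < s.re := hδ.trans_le h₁
    have hB := hB (s + 1) ⟨by rw [add_re, one_re]; linarith, by rw [add_re, one_re]; linarith⟩
    rw [Gamma_add_one s fun h ↦ hs.ne' (by rw [h, zero_re]), norm_mul,
      le_div_iff₀ (by positivity)] at hB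
    have hshift : ‖s‖ ≤ ‖s + 1‖ := by
      rw [norm_def, norm_def, normSq_apply, normSq_apply, add_re, add_im, one_re, one_im]
      exact Real.sqrt_le_sqrt (by nlinarith)
    have hone : 1 + ‖s‖ ≤ (1 + δ⁻¹) * ‖s‖ := by
      have : 1 ≤ δ⁻¹ * ‖s‖ := by
        rw [inv_mul_eq_div, one_le_div hδ]
        exact h₁.trans (re_le_norm s)
      linarith
    rw [le_div_iff₀ (by positivity)]
    calc ‖Gamma s‖ * (1 + ‖s‖) ^ (n + 1) = ‖Gamma s‖ * (1 + ‖s‖) ^ n * (1 + ‖s‖) := by ring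
      _ ≤ ‖Gamma s‖ * (1 + ‖s + 1‖) ^ n * ((1 + δ⁻¹) * ‖s‖) := by gcongr
      _ = (1 + δ⁻¹) * (‖s‖ * ‖Gamma s‖ * (1 + ‖s + 1‖) ^ n) := by ring
      _ ≤ (1 + δ⁻¹) * B := by gcongr

theorem hasRapidDecayOn_deriv_Gamma {δ : ℝ} (hδ : 0 < δ) (M : ℝ) :
    HasRapidDecayOn (deriv Gamma) {s | δ ≤ s.re ∧ s.re ≤ M} := by
  have hδ₂ : 0 < δ / 2 := half_pos hδ
  refine (hasRapidDecayOn_Gamma hδ₂ (M + 1)).deriv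
    (fun s hs ↦ (differentiableAt_Gamma_of_re_pos (hδ₂.trans_le hs.1)).differentiableWithinAt)
    (lt_min one_pos hδ₂) (min_le_left _ _) fun s hs z hz ↦ ?_
  have hre := (abs_re_le_norm (z - s)).trans (mem_closedBall_iff_norm.1 hz)
  rw [sub_re, abs_le] at hre
  exact ⟨by linarith [hre.1, hs.1, min_le_right 1 (δ / 2)],
    by linarith [hre.2, hs.2, min_le_left 1 (δ / 2)]⟩

end Gamma

section MellinInversion

open Complex MeasureTheory

theorem one_add_sq_le_one_add_norm_sq (σ t : ℝ) : 1 + t ^ 2 ≤ (1 + ‖(σ + t * I : ℂ)‖) ^ 2 := by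
  have ht : |t| ≤ ‖(σ + t * I : ℂ)‖ := by simpa using abs_im_le_norm (σ + t * I)
  nlinarith [abs_nonneg t, sq_abs t]

theorem hasDerivAt_ofReal_add_mul_I (σ t : ℝ) :
    HasDerivAt (fun t : ℝ ↦ (σ + t * I : ℂ)) I t := by
  simpa using ((ofRealCLM.hasDerivAt (x := t)).mul_const I).const_add (σ : ℂ)

theorem HasRapidDecayOn.exists_norm_vertical_le {F : ℂ → ℂ} {S : Set ℂ} (hF : HasRapidDecayOn F S) :
    ∃ B, ∀ σ t : ℝ, (σ + t * I : ℂ) ∈ S → ‖F (σ + t * I)‖ ≤ B * (1 + t ^ 2)⁻¹ := by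
  obtain ⟨B, hB, h⟩ := hF.exists_pos_norm_le 2
  refine ⟨B, fun σ t ht ↦ (h _ ht).trans ?_⟩
  rw [div_eq_mul_inv]
  gcongr
  exact one_add_sq_le_one_add_norm_sq σ t

theorem HasRapidDecayOn.verticalIntegrable {F : ℂ → ℂ} {S : Set ℂ} {σ : ℝ}
    (hF : HasRapidDecayOn F S) (hS : ∀ t : ℝ, (σ + t * I : ℂ) ∈ S)
    (hm : AEStronglyMeasurable fun t : ℝ ↦ F (σ + t * I)) : VerticalIntegrable F σ := by
  obtain ⟨B, hB⟩ := hF.exists_norm_vertical_le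
  exact (integrable_inv_one_add_sq.const_mul B).mono' hm (.of_forall fun t ↦ hB σ t (hS t))

theorem HasRapidDecayOn.exists_integral_norm_vertical_le {F : ℂ → ℂ} {S : Set ℂ}
    (hF : HasRapidDecayOn F S) :
    ∃ B, ∀ σ : ℝ, (∀ t : ℝ, (σ + t * I : ℂ) ∈ S) → ∫ t : ℝ, ‖F (σ + t * I)‖ ≤ B := by
  obtain ⟨B, hB⟩ := hF.exists_norm_vertical_le
  exact ⟨_, fun σ hσ ↦ integral_mono_of_nonneg (.of_forall fun t ↦ norm_nonneg _)
    (integrable_inv_one_add_sq.const_mul B) (.of_forall fun t ↦ hB σ t (hσ t))⟩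

theorem norm_cpow_neg_vertical {x : ℝ} (hx : 0 < x) (σ t : ℝ) :
    ‖(x : ℂ) ^ (-(σ + t * I : ℂ))‖ = x ^ (-σ) := by
  rw [norm_cpow_eq_rpow_re_of_pos hx]
  simp

theorem continuous_cpow_neg_vertical {x : ℝ} (hx : 0 < x) (σ : ℝ) :
    Continuous fun t : ℝ ↦ (x : ℂ) ^ (-(σ + t * I : ℂ)) :=
  .const_cpow (by fun_prop) (.inl (ofReal_ne_zero.2 hx.ne'))

variable {F G : ℂ → ℂ} {σ x : ℝ}

theorem verticalIntegrable_cpow_neg_mul (hF : VerticalIntegrable F σ) (hx : 0 < x) :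
    VerticalIntegrable (fun s ↦ (x : ℂ) ^ (-s) * F s) σ :=
  Integrable.bdd_mul hF (continuous_cpow_neg_vertical hx σ).aestronglyMeasurable
    (.of_forall fun t ↦ (norm_cpow_neg_vertical hx σ t).le)

theorem norm_mellinInv_le (hx : 0 < x) :
    ‖mellinInv σ F x‖ ≤ x ^ (-σ) / (2 * Real.pi) * ∫ t : ℝ, ‖F (σ + t * I)‖ := by
  have hpi : 0 < 1 / (2 * Real.pi) := by positivity
  rw [mellinInv, norm_smul, Real.norm_of_nonneg hpi.le]
  calc 1 / (2 * Real.pi) * ‖∫ t : ℝ, (x : ℂ) ^ (-(σ + t * I : ℂ)) • F (σ + t * I)‖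
      ≤ 1 / (2 * Real.pi) * ∫ t : ℝ, x ^ (-σ) * ‖F (σ + t * I)‖ := by
        gcongr
        refine (norm_integral_le_integral_norm _).trans_eq
          (integral_congr_ae (.of_forall fun t ↦ ?_))
        simp only [norm_smul, norm_cpow_neg_vertical hx]
    _ = _ := by rw [integral_const_mul]; ring

theorem mellinInv_deriv (hd : ∀ t : ℝ, DifferentiableAt ℂ F (σ + t * I))
    (hF : VerticalIntegrable F σ) (hF' : VerticalIntegrable (deriv F) σ) (hx : 0 < x) :
    mellinInv σ (deriv F) x = Real.log x * mellinInv σ F x := by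
  have hx₀ : (x : ℂ) ≠ 0 := ofReal_ne_zero.2 hx.ne'
  have hderiv (t : ℝ) : HasDerivAt (fun t : ℝ ↦ (x : ℂ) ^ (-(σ + t * I : ℂ)) * F (σ + t * I))
      (I * ((x : ℂ) ^ (-(σ + t * I : ℂ)) * deriv F (σ + t * I) -
        Real.log x * ((x : ℂ) ^ (-(σ + t * I : ℂ)) * F (σ + t * I)))) t := by
    refine ((((hasDerivAt_id _).fun_neg.const_cpow (.inl hx₀)).mul
      (hd t).hasDerivAt).comp_of_eq t (hasDerivAt_ofReal_add_mul_I σ t) rfl).congr_deriv ?_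
    rw [ofReal_log hx.le]
    simp only [id_eq]
    ring
  have hi := verticalIntegrable_cpow_neg_mul hF hx
  have hi' := verticalIntegrable_cpow_neg_mul hF' hx
  have hzero := integral_eq_zero_of_hasDerivAt_of_integrable hderiv
    ((Integrable.sub hi' (Integrable.const_mul hi _)).const_mul I) hi
  rw [integral_const_mul, integral_sub hi' (Integrable.const_mul hi _), integral_const_mul,
    mul_eq_zero, or_iff_right I_ne_zero, sub_eq_zero] at hzero
  simp only [mellinInv, smul_eq_mul, real_smul, hzero]
  ring

theorem mellinInv_add (hF : VerticalIntegrable F σ) (hG : VerticalIntegrable G σ) (hx : 0 < x) :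
    mellinInv σ (fun s ↦ F s + G s) x = mellinInv σ F x + mellinInv σ G x := by
  simp only [mellinInv, smul_eq_mul, mul_add]
  rw [integral_add (verticalIntegrable_cpow_neg_mul hF hx)
    (verticalIntegrable_cpow_neg_mul hG hx), smul_add]

theorem mellinInv_comp_sub_ofReal (a : ℝ) (hx : 0 < x) :
    mellinInv σ (fun s ↦ F (s - a)) x = (x : ℂ) ^ (-a : ℂ) * mellinInv (σ - a) F x := by
  rw [mellinInv, mellinInv, mul_smul_comm, ← integral_const_mul]
  congr 1
  refine integral_congr_ae (.of_forall fun t ↦ ?_)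
  have h : (σ + t * I : ℂ) - a = (σ - a : ℝ) + t * I := by push_cast; ring
  simp only [smul_eq_mul, ← h]
  rw [← mul_assoc, ← cpow_add _ _ (ofReal_ne_zero.2 hx.ne')]
  ring_nf

theorem hasSum_mellinInv_mul_tsum {ι : Type*} [Countable ι] {b : ι → ℂ} {l : ι → ℝ}
    (hl : ∀ i, 0 < l i) (hF : VerticalIntegrable F σ)
    (hsum : Summable fun i ↦ ‖b i‖ * l i ^ (-σ)) (hx : 0 < x) :
    HasSum (fun i ↦ b i * mellinInv σ F (l i * x))
      (mellinInv σ (fun s ↦ F s * ∑' i, b i * (l i : ℂ) ^ (-s)) x) := by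
  have hnorm (i : ι) (t : ℝ) :
      ‖b i * (((l i * x : ℝ) : ℂ) ^ (-(σ + t * I : ℂ)) * F (σ + t * I))‖ =
        ‖b i‖ * l i ^ (-σ) * (x ^ (-σ) * ‖F (σ + t * I)‖) := by
    rw [norm_mul, norm_mul, norm_cpow_neg_vertical (mul_pos (hl i) hx),
      Real.mul_rpow (hl i).le hx.le]
    ring
  have hint (i : ι) := (verticalIntegrable_cpow_neg_mul hF (mul_pos (hl i) hx)).const_mul (b i)
  have hsum' : Summable fun i ↦
      ∫ t : ℝ, ‖b i * (((l i * x : ℝ) : ℂ) ^ (-(σ + t * I : ℂ)) * F (σ + t * I))‖ := by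
    simp_rw [hnorm, integral_const_mul]
    exact hsum.mul_right _
  have htsum (t : ℝ) :
      ∑' i, b i * (((l i * x : ℝ) : ℂ) ^ (-(σ + t * I : ℂ)) * F (σ + t * I)) =
        (x : ℂ) ^ (-(σ + t * I : ℂ)) *
          (F (σ + t * I) * ∑' i, b i * (l i : ℂ) ^ (-(σ + t * I : ℂ))) := by
    simp only [← tsum_mul_left]
    refine tsum_congr fun i ↦ ?_
    rw [ofReal_mul, mul_cpow_ofReal_nonneg (hl i).le hx.le]
    ring
  have h := (hasSum_integral_of_summable_integral_norm hint hsum').const_smul (1 / (2 * Real.pi))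
  simp only [htsum, integral_const_mul, ← mul_smul_comm] at h
  exact h

theorem verticalIntegrable_Gamma (hσ : 0 < σ) : VerticalIntegrable Gamma σ := by
  refine (hasRapidDecayOn_Gamma hσ σ).verticalIntegrable (fun t ↦ by simp) ?_
  refine (continuous_iff_continuousAt.2 fun t ↦ ?_).aestronglyMeasurable
  exact (differentiableAt_Gamma_of_re_pos (by simpa using hσ)).continuousAt.comp_of_eq
    (hasDerivAt_ofReal_add_mul_I σ t).continuousAt rfl

theorem mellinInv_Gamma (hσ : 0 < σ) (hx : 0 < x) : mellinInv σ Gamma x = Real.exp (-x) := by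
  have hmellin (t : ℝ) :
      mellin (fun x : ℝ ↦ (Real.exp (-x) : ℂ)) (σ + t * I) = Gamma (σ + t * I) := by
    rw [Gamma_eq_integral (by simpa using hσ), GammaIntegral_eq_mellin]
  have hinv : mellinInv σ Gamma x =
      mellinInv σ (mellin fun x : ℝ ↦ (Real.exp (-x) : ℂ)) x := by
    simp only [mellinInv, hmellin]
  rw [hinv, mellinInv_mellin_eq σ _ hx]
  · refine (GammaIntegral_convergent (s := σ) (by simpa using hσ)).congr_fun (fun t _ ↦ ?_)
      measurableSet_Ioi
    simp [mul_comm]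
  · unfold VerticalIntegrable
    simp_rw [hmellin]
    exact verticalIntegrable_Gamma hσ
  · fun_prop

theorem HasRapidDecayOn.exists_abs_log_mul_norm_mellinInv_le {S : Set ℂ}
    (hd : ∀ s ∈ S, DifferentiableAt ℂ F s) (hF : HasRapidDecayOn F S)
    (hF' : HasRapidDecayOn (_root_.deriv F) S) :
    ∃ C, ∀ σ : ℝ, (∀ t : ℝ, (σ + t * I : ℂ) ∈ S) → ∀ x : ℝ, 0 < x →
      |Real.log x| * ‖mellinInv σ F x‖ ≤ C * x ^ (-σ) := by
  obtain ⟨B, hB⟩ := hF'.exists_integral_norm_vertical_le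
  refine ⟨B / (2 * Real.pi), fun σ hσ x hx ↦ ?_⟩
  have hF₁ : VerticalIntegrable F σ := hF.verticalIntegrable hσ <|
    (continuous_iff_continuousAt.2 fun t ↦ (hd _ (hσ t)).continuousAt.comp_of_eq
      (hasDerivAt_ofReal_add_mul_I σ t).continuousAt rfl).aestronglyMeasurable
  have hF₂ : VerticalIntegrable (_root_.deriv F) σ := hF'.verticalIntegrable hσ
    ((measurable_deriv F).comp (by fun_prop)).aestronglyMeasurable
  calc |Real.log x| * ‖mellinInv σ F x‖ = ‖mellinInv σ (_root_.deriv F) x‖ := by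
        rw [mellinInv_deriv (fun t ↦ hd _ (hσ t)) hF₁ hF₂ hx, norm_mul, norm_real,
          Real.norm_eq_abs]
    _ ≤ x ^ (-σ) / (2 * Real.pi) * ∫ t : ℝ, ‖_root_.deriv F (σ + t * I)‖ := norm_mellinInv_le hx
    _ ≤ x ^ (-σ) / (2 * Real.pi) * B := by gcongr; exact hB σ hσ
    _ = B / (2 * Real.pi) * x ^ (-σ) := by ring

end MellinInversion

section Tauberian

open Complex MeasureTheory

variable {H : ℂ → ℂ}

theorem exists_abs_log_mul_norm_mellinInv_mul_Gamma_le (hd : DifferentiableOn ℂ H {s | 1 < s.re})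
    (hH : HasPolyGrowthOn H {s | 1 < s.re}) (hH' : HasPolyGrowthOn (deriv H) {s | 1 < s.re}) :
    ∃ C, ∀ σ : ℝ, 1 < σ → σ ≤ 2 → ∀ x : ℝ, 0 < x →
      |Real.log x| * ‖mellinInv σ (fun s ↦ H s * Gamma s) x‖ ≤ C * x ^ (-σ) := by
  let S : Set ℂ := {s | 1 < s.re ∧ s.re ≤ 2}
  have hSre : S ⊆ {s | 1 < s.re} := fun s hs ↦ hs.1
  have hSstrip : S ⊆ {s | 1 ≤ s.re ∧ s.re ≤ 2} := fun s hs ↦ ⟨hs.1.le, hs.2⟩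
  have hdH (s : ℂ) (hs : s ∈ S) : HasDerivAt H (deriv H s) s :=
    (hd.differentiableAt ((isOpen_re_gt 1).mem_nhds hs.1)).hasDerivAt
  have hdΓ (s : ℂ) (hs : s ∈ S) : HasDerivAt Gamma (deriv Gamma s) s :=
    (differentiableAt_Gamma_of_re_pos (one_pos.trans hs.1)).hasDerivAt
  have hΓ := (hasRapidDecayOn_Gamma one_pos 2).mono hSstrip
  have hΓ' := (hasRapidDecayOn_deriv_Gamma one_pos 2).mono hSstrip
  have hderiv : HasRapidDecayOn (deriv fun s ↦ H s * Gamma s) S :=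
    ((hΓ.polyGrowth_mul (hH'.mono hSre)).add (hΓ'.polyGrowth_mul (hH.mono hSre))).congr
      fun s hs ↦ ((hdH s hs).mul (hdΓ s hs)).deriv.symm
  obtain ⟨C, hC⟩ := HasRapidDecayOn.exists_abs_log_mul_norm_mellinInv_le
    (fun s hs ↦ ((hdH s hs).mul (hdΓ s hs)).differentiableAt)
    (hΓ.polyGrowth_mul (hH.mono hSre)) hderiv
  exact ⟨C, fun σ h₁ h₂ ↦ hC σ fun t ↦ by simpa [S] using ⟨h₁, h₂⟩⟩

theorem mellinInv_Gamma_sub_one {σ x : ℝ} (hσ : 1 < σ) (hx : 0 < x) :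
    mellinInv σ (fun s ↦ Gamma (s - 1)) x = (x⁻¹ * Real.exp (-x) : ℝ) := by
  have h := mellinInv_comp_sub_ofReal (σ := σ) (F := Gamma) 1 hx
  rw [ofReal_one] at h
  rw [h, mellinInv_Gamma (sub_pos.2 hσ) hx, cpow_neg_one]
  push_cast
  rfl

theorem tsum_mul_exp_neg_mul_eq {ι : Type*} [Countable ι] {b : ι → ℂ} {l : ι → ℝ}
    (hl : ∀ i, 0 < l i) {σ x : ℝ} (hσ : 1 < σ) (hx : 0 < x)
    (hsum : Summable fun i ↦ ‖b i‖ * l i ^ (-σ)) (hH : ContinuousOn H {s | s.re = σ})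
    (hHσ : HasPolyGrowthOn H {s | s.re = σ})
    (hD : ∀ s : ℂ, s.re = σ → ∑' i, b i * (l i : ℂ) ^ (-s) = 1 / (s - 1) + H s) :
    ∑' i, b i * Real.exp (-(l i * x)) =
      (x⁻¹ * Real.exp (-x) : ℝ) + mellinInv σ (fun s ↦ H s * Gamma s) x := by
  have hσ₀ : 0 < σ := one_pos.trans hσ
  have hline (t : ℝ) : (σ + t * I : ℂ).re = σ := by simp
  have hΓ := verticalIntegrable_Gamma hσ₀
  have hHΓ : VerticalIntegrable (fun s ↦ H s * Gamma s) σ :=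
    HasRapidDecayOn.verticalIntegrable
      (((hasRapidDecayOn_Gamma hσ₀ σ).mono fun s (hs : s.re = σ) ↦ ⟨hs.ge, hs.le⟩).polyGrowth_mul
        hHσ) hline
      ((hH.comp_continuous (by fun_prop) hline).aestronglyMeasurable.mul hΓ.aestronglyMeasurable)
  have hΓ₁ : VerticalIntegrable (fun s ↦ Gamma (s - 1)) σ := by
    refine (verticalIntegrable_Gamma (sub_pos.2 hσ)).congr (.of_forall fun t ↦ ?_)
    push_cast
    ring_nf
  have hsplit (t : ℝ) : Gamma (σ + t * I) * ∑' i, b i * (l i : ℂ) ^ (-(σ + t * I : ℂ)) =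
      Gamma (σ + t * I - 1) + H (σ + t * I) * Gamma (σ + t * I) := by
    have hne : (σ + t * I - 1 : ℂ) ≠ 0 := fun h ↦ by
      have := congrArg re h
      rw [sub_re, hline, one_re, zero_re] at this
      linarith
    rw [hD _ (hline t), show Gamma (σ + t * I) = (σ + t * I - 1) * Gamma (σ + t * I - 1) by
      rw [← Gamma_add_one _ hne, sub_add_cancel]]
    field_simp
  have h := (hasSum_mellinInv_mul_tsum hl hΓ hsum hx).tsum_eq
  simp only [mellinInv_Gamma hσ₀ (mul_pos (hl _) hx)] at h
  rw [h, ← mellinInv_Gamma_sub_one hσ hx, ← mellinInv_add hΓ₁ hHΓ hx]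
  simp only [mellinInv, hsplit]

theorem one_lt_log_of_three_le {X : ℝ} (hX : 3 ≤ X) : 1 < Real.log X := by
  rw [Real.lt_log_iff_exp_lt (by linarith)]
  linarith [Real.exp_one_lt_three]

theorem rpow_one_add_inv_log {X : ℝ} (hX : 1 < X) :
    X ^ (1 + (Real.log X)⁻¹) = Real.exp 1 * X := by
  have hX₀ : 0 < X := one_pos.trans hX
  rw [Real.rpow_add hX₀, Real.rpow_one, Real.rpow_def_of_pos hX₀,
    mul_inv_cancel₀ (Real.log_pos hX).ne', mul_comm]

theorem abs_mul_exp_neg_inv_sub_self_le_one {X : ℝ} (hX : 0 < X) :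
    |X * Real.exp (-X⁻¹) - X| ≤ 1 := by
  have hupper : Real.exp (-X⁻¹) ≤ 1 := Real.exp_le_one_iff.2 (by simpa using hX.le)
  have hlower : 1 - X⁻¹ ≤ Real.exp (-X⁻¹) := by linarith [Real.add_one_le_exp (-X⁻¹)]
  have hmul : X * (1 - X⁻¹) = X - 1 := by field_simp
  exact abs_le.2 ⟨by nlinarith, by nlinarith⟩

theorem exists_norm_tsum_mul_exp_neg_div_sub_le {ι : Type*} [Countable ι] {b : ι → ℂ} {l : ι → ℝ}
    (hl : ∀ i, 0 < l i) (hsum : ∀ σ : ℝ, 1 < σ → Summable fun i ↦ ‖b i‖ * l i ^ (-σ))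
    (hd : DifferentiableOn ℂ H {s | 1 < s.re}) (hH : HasPolyGrowthOn H {s | 1 < s.re})
    (hH' : HasPolyGrowthOn (deriv H) {s | 1 < s.re})
    (hD : ∀ s : ℂ, 1 < s.re → ∑' i, b i * (l i : ℂ) ^ (-s) = 1 / (s - 1) + H s) :
    ∃ C, ∀ X : ℝ, 3 ≤ X → ‖∑' i, b i * Real.exp (-(l i / X)) - X‖ ≤ C * (X / Real.log X) := by
  obtain ⟨C, hC⟩ := exists_abs_log_mul_norm_mellinInv_mul_Gamma_le hd hH hH'
  refine ⟨1 + C * Real.exp 1, fun X hX ↦ ?_⟩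
  have hX₀ : 0 < X := by linarith
  have hlog : 1 < Real.log X := one_lt_log_of_three_le hX
  have hlog₀ : 0 < Real.log X := one_pos.trans hlog
  -- On the line `re s = 1 + 1 / log X` the factor `X ^ s` has size `e * X`.
  let σ := 1 + (Real.log X)⁻¹
  have hσ : 1 < σ := lt_add_of_pos_right 1 (inv_pos.2 hlog₀)
  have hσ₂ : σ ≤ 2 := by linarith [inv_le_one_of_one_le₀ hlog.le]
  have hXσ : X⁻¹ ^ (-σ) = Real.exp 1 * X := by
    rw [Real.inv_rpow hX₀.le, Real.rpow_neg hX₀.le, inv_inv, rpow_one_add_inv_log (by linarith)]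
  have hsub : {s : ℂ | s.re = σ} ⊆ {s | 1 < s.re} := fun s hs ↦ hσ.trans_eq hs.symm
  have hmain := tsum_mul_exp_neg_mul_eq hl hσ (inv_pos.2 hX₀) (hsum σ hσ)
    (hd.continuousOn.mono hsub) (hH.mono hsub) fun s hs ↦ hD s (hsub hs)
  simp only [← div_eq_mul_inv, inv_inv] at hmain
  have hrem : ‖mellinInv σ (fun s ↦ H s * Gamma s) X⁻¹‖ ≤ C * Real.exp 1 * (X / Real.log X) := by
    have h := hC σ hσ hσ₂ X⁻¹ (inv_pos.2 hX₀)
    rw [hXσ, Real.log_inv, abs_neg, abs_of_pos hlog₀, ← le_div_iff₀' hlog₀] at h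
    exact h.trans_eq (by ring)
  have hexp : |X * Real.exp (-X⁻¹) - X| ≤ X / Real.log X :=
    (abs_mul_exp_neg_inv_sub_self_le_one hX₀).trans
      ((one_le_div hlog₀).2 (Real.log_le_self hX₀.le))
  calc ‖∑' i, b i * Real.exp (-(l i / X)) - X‖
      = ‖((X * Real.exp (-X⁻¹) - X : ℝ) : ℂ) + mellinInv σ (fun s ↦ H s * Gamma s) X⁻¹‖ := by
        rw [hmain]
        push_cast
        ring_nf
    _ ≤ X / Real.log X + C * Real.exp 1 * (X / Real.log X) := by
        refine (norm_add_le _ _).trans (add_le_add ?_ hrem)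
        rwa [norm_real, Real.norm_eq_abs]
    _ = (1 + C * Real.exp 1) * (X / Real.log X) := by ring

end Tauberian

section ExponentialSums

open Real Finset

/-- The exponentially smoothed counting function `∑ exp (-q i / X)` of a family `q`. -/
noncomputable def expSum {ι : Type*} (q : ι → ℝ) (X : ℝ) : ℝ := ∑' i, exp (-(q i / X))

/-- The logarithmically weighted variant `∑ log (q i) * exp (-q i / X)` of `expSum`, which plays
the role of the Chebyshev function. -/
noncomputable def logExpSum {ι : Type*} (q : ι → ℝ) (X : ℝ) : ℝ :=
  ∑' i, log (q i) * exp (-(q i / X))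

theorem exp_neg_div_le_exp_neg_div {q X Y : ℝ} (hq : 0 ≤ q) (hX : 0 < X) (hXY : X ≤ Y) :
    exp (-(q / X)) ≤ exp (-(q / Y)) :=
  exp_le_exp.2 (neg_le_neg (div_le_div_of_nonneg_left hq hX hXY))

theorem exp_neg_div_le_one {q X : ℝ} (hq : 0 ≤ q) (hX : 0 ≤ X) : exp (-(q / X)) ≤ 1 :=
  exp_le_one_iff.2 (neg_nonpos.2 (div_nonneg hq hX))

theorem one_le_exp_one_mul_exp_neg_div {q X : ℝ} (hq : 0 ≤ q) (hqX : q ≤ X) :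
    1 ≤ exp 1 * exp (-(q / X)) := by
  rw [← exp_add, one_le_exp_iff]
  linarith [div_le_one_of_le₀ hqX (hq.trans hqX)]

theorem one_half_le_log {x : ℝ} (hx : 2 ≤ x) : 1 / 2 ≤ log x := by
  linarith [log_two_gt_d9, log_le_log two_pos hx]

theorem log_le_nat_log_floor_add_one {y : ℝ} (hy : 0 < y) :
    log y ≤ (Nat.log 2 ⌊y⌋₊ + 1 : ℕ) := by
  have hlt : y < 2 ^ (Nat.log 2 ⌊y⌋₊ + 1) := by
    exact_mod_cast Nat.lt_of_floor_lt (Nat.lt_pow_succ_log_self one_lt_two ⌊y⌋₊)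
  calc log y ≤ (Nat.log 2 ⌊y⌋₊ + 1 : ℕ) * log 2 := by
        rw [← log_pow]
        exact log_le_log hy hlt.le
    _ ≤ (Nat.log 2 ⌊y⌋₊ + 1 : ℕ) := mul_le_of_le_one_right (Nat.cast_nonneg _)
        (by linarith [log_two_lt_d9])

theorem mem_range_nat_log_floor_add_one {y : ℝ} (hy : 1 ≤ y) {k : ℕ} :
    k ∈ range (Nat.log 2 ⌊y⌋₊ + 1) ↔ (2 : ℝ) ^ k ≤ y := by
  rw [mem_range, Nat.lt_succ_iff, Nat.le_log_iff_pow_le one_lt_two (Nat.floor_pos.2 hy).ne',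
    Nat.le_floor_iff (by linarith)]
  norm_cast

theorem sum_range_succ_div_two_pow_le (n : ℕ) : ∑ k ∈ range n, ((k : ℝ) + 1) / 2 ^ k ≤ 4 := by
  have h : ∑ k ∈ range n, ((k : ℝ) + 1) / 2 ^ k = 4 - (2 * n + 4) / 2 ^ n := by
    induction n with
    | zero => norm_num
    | succ n ih =>
      rw [sum_range_succ, ih]
      push_cast
      field_simp
      ring
  rw [h]
  exact sub_le_self _ (by positivity)

theorem log_div_le_exp_one_mul_sum {q X : ℝ} (hq : 1 ≤ q) (hqX : q ≤ X) :
    log (X / q) ≤ exp 1 * ∑ k ∈ range (Nat.log 2 ⌊X⌋₊ + 1), exp (-(q / (X / 2 ^ k))) := by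
  have hq₀ : 0 < q := one_pos.trans_le hq
  have hy : 1 ≤ X / q := (one_le_div hq₀).2 hqX
  have hsub : range (Nat.log 2 ⌊X / q⌋₊ + 1) ⊆ range (Nat.log 2 ⌊X⌋₊ + 1) := fun _ hk ↦
    (mem_range_nat_log_floor_add_one (hq.trans hqX)).2 <|
      ((mem_range_nat_log_floor_add_one hy).1 hk).trans (div_le_self (hq₀.le.trans hqX) hq)
  calc log (X / q) ≤ ∑ _ ∈ range (Nat.log 2 ⌊X / q⌋₊ + 1), (1 : ℝ) := by
        rw [sum_const, card_range, nsmul_one]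
        exact log_le_nat_log_floor_add_one (one_pos.trans_le hy)
    _ ≤ ∑ k ∈ range (Nat.log 2 ⌊X / q⌋₊ + 1), exp 1 * exp (-(q / (X / 2 ^ k))) := by
        refine sum_le_sum fun k hk ↦ one_le_exp_one_mul_exp_neg_div hq₀.le ?_
        rw [le_div_comm₀ hq₀ (by positivity)]
        exact (mem_range_nat_log_floor_add_one hy).1 hk
    _ ≤ ∑ k ∈ range (Nat.log 2 ⌊X⌋₊ + 1), exp 1 * exp (-(q / (X / 2 ^ k))) :=
        sum_le_sum_of_subset_of_nonneg hsub fun _ _ _ ↦ by positivity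
    _ = _ := (mul_sum _ _ _).symm

theorem log_mul_exp_neg_le {u : ℝ} (hu : 0 < u) : log u * exp (-u) ≤ exp (-(u / 2)) := by
  have hlog : log u ≤ exp (u / 2) := by
    linarith [log_le_sub_one_of_pos (half_pos hu), add_one_le_exp (u / 2),
      log_div hu.ne' two_ne_zero, log_two_lt_d9]
  calc log u * exp (-u) ≤ exp (u / 2) * exp (-u) := by gcongr
    _ = exp (-(u / 2)) := by rw [← exp_add]; ring_nf

theorem abs_log_sub_log_mul_exp_neg_div_le {q X : ℝ} (hq : 1 ≤ q) (hX : 0 < X) :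
    |log X - log q| * exp (-(q / X)) ≤ exp (-(q / (2 * X))) +
      exp 1 * ∑ k ∈ range (Nat.log 2 ⌊X⌋₊ + 1), exp (-(q / (X / 2 ^ k))) := by
  have hq₀ : 0 < q := one_pos.trans_le hq
  rcases le_total q X with hqX | hXq
  · rw [← log_div hX.ne' hq₀.ne', abs_of_nonneg (log_nonneg ((one_le_div hq₀).2 hqX))]
    exact (mul_le_of_le_one_right (log_nonneg ((one_le_div hq₀).2 hqX))
      (exp_neg_div_le_one hq₀.le hX.le)).trans
      ((log_div_le_exp_one_mul_sum hq hqX).trans (le_add_of_nonneg_left (exp_pos _).le))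
  · rw [abs_sub_comm, ← log_div hq₀.ne' hX.ne',
      abs_of_nonneg (log_nonneg ((one_le_div hX).2 hXq)), mul_comm 2 X, ← div_div]
    exact (log_mul_exp_neg_le (div_pos hq₀ hX)).trans (le_add_of_nonneg_right (by positivity))

variable {ι : Type*} {q : ι → ℝ}

theorem summable_log_mul_exp_neg_div (hq : ∀ i, 1 ≤ q i)
    (hsum : ∀ σ : ℝ, 1 < σ → Summable fun i ↦ q i ^ (-σ)) {X : ℝ} (hX : 0 < X) :
    Summable fun i ↦ log (q i) * exp (-(q i / X)) := by
  refine ((summable_log_mul_rpow_neg hq hsum one_lt_two).mul_left (2 * X ^ 2)).of_nonneg_of_le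
    (fun i ↦ mul_nonneg (log_nonneg (hq i)) (exp_pos _).le) fun i ↦ ?_
  have hq₀ : 0 < q i := one_pos.trans_le (hq i)
  have hexp : exp (-(q i / X)) ≤ 2 * X ^ 2 * q i ^ (-2 : ℝ) := by
    have h := quadratic_le_exp_of_nonneg (div_pos hq₀ hX).le
    have hu : 0 < q i / X := div_pos hq₀ hX
    rw [exp_neg, rpow_neg hq₀.le, rpow_two]
    calc (exp (q i / X))⁻¹ ≤ ((q i / X) ^ 2 / 2)⁻¹ := inv_anti₀ (by positivity) (by linarith)
      _ = 2 * X ^ 2 * (q i ^ 2)⁻¹ := by field_simp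
  calc log (q i) * exp (-(q i / X)) ≤ log (q i) * (2 * X ^ 2 * q i ^ (-2 : ℝ)) :=
        mul_le_mul_of_nonneg_left hexp (log_nonneg (hq i))
    _ = 2 * X ^ 2 * (log (q i) * q i ^ (-2 : ℝ)) := by ring

theorem exp_neg_div_le_two_mul_log_mul {q : ℝ} (hq : 2 ≤ q) (X : ℝ) :
    exp (-(q / X)) ≤ 2 * (log q * exp (-(q / X))) := by
  nlinarith [one_half_le_log hq, exp_pos (-(q / X))]

theorem summable_exp_neg_div (hq : ∀ i, 2 ≤ q i) {X : ℝ}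
    (hS : Summable fun i ↦ log (q i) * exp (-(q i / X))) :
    Summable fun i ↦ exp (-(q i / X)) :=
  (hS.mul_left 2).of_nonneg_of_le (fun _ ↦ (exp_pos _).le)
    fun i ↦ exp_neg_div_le_two_mul_log_mul (hq i) X

theorem expSum_nonneg (q : ι → ℝ) (X : ℝ) : 0 ≤ expSum q X := tsum_nonneg fun _ ↦ (exp_pos _).le

theorem expSum_le_two_mul_logExpSum (hq : ∀ i, 2 ≤ q i) {X : ℝ}
    (hS : Summable fun i ↦ log (q i) * exp (-(q i / X))) :
    expSum q X ≤ 2 * logExpSum q X := by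
  rw [logExpSum, ← tsum_mul_left]
  exact (summable_exp_neg_div hq hS).tsum_le_tsum
    (fun i ↦ exp_neg_div_le_two_mul_log_mul (hq i) X) (hS.mul_left 2)

theorem monotoneOn_expSum (hq : ∀ i, 0 ≤ q i)
    (hP : ∀ X : ℝ, 0 < X → Summable fun i ↦ exp (-(q i / X))) :
    MonotoneOn (expSum q) (Set.Ioi 0) := fun X hX Y hY hXY ↦
  (hP X hX).tsum_le_tsum (fun i ↦ exp_neg_div_le_exp_neg_div (hq i) hX hXY) (hP Y hY)

theorem monotoneOn_logExpSum (hq : ∀ i, 1 ≤ q i)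
    (hS : ∀ X : ℝ, 0 < X → Summable fun i ↦ log (q i) * exp (-(q i / X))) :
    MonotoneOn (logExpSum q) (Set.Ioi 0) := fun X hX Y hY hXY ↦
  (hS X hX).tsum_le_tsum (fun i ↦ mul_le_mul_of_nonneg_left
    (exp_neg_div_le_exp_neg_div (zero_le_one.trans (hq i)) hX hXY) (log_nonneg (hq i))) (hS Y hY)

theorem exists_logExpSum_le (hmono : MonotoneOn (logExpSum q) (Set.Ioi 0)) {C : ℝ}
    (hC : ∀ X : ℝ, 3 ≤ X → |logExpSum q X - X| ≤ C * (X / log X)) :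
    ∃ B > 0, ∀ X : ℝ, 1 ≤ X → logExpSum q X ≤ B * X := by
  refine ⟨3 * (1 + |C|), by positivity, fun X hX ↦ ?_⟩
  have hX₃ : 3 ≤ 3 * X := by linarith
  have hdiv : 3 * X / log (3 * X) ≤ 3 * X :=
    div_le_self (by linarith) (one_lt_log_of_three_le hX₃).le
  have hle : C * (3 * X / log (3 * X)) ≤ |C| * (3 * X) :=
    mul_le_mul (le_abs_self C) hdiv (div_nonneg (by linarith) (log_nonneg (by linarith)))
      (abs_nonneg C)
  have hX₀ : (0 : ℝ) < X := by linarith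
  calc logExpSum q X ≤ logExpSum q (3 * X) :=
        hmono hX₀ (Set.mem_Ioi.2 (by linarith)) (by linarith)
    _ ≤ 3 * (1 + |C|) * X := by linarith [(abs_le.1 (hC (3 * X) hX₃)).2]

theorem exp_neg_div_le_exp_neg_div_sqrt_add {q Y : ℝ} (hq : 2 ≤ q) (hY : 1 ≤ Y) :
    exp (-(q / Y)) ≤
      exp 1 * exp (-(q / √Y)) + 4 / (1 + log Y) * (log q * exp (-(q / Y))) := by
  have hL : 0 ≤ log Y := log_nonneg hY
  have hq₀ : 0 ≤ q := by linarith
  have hlq := one_half_le_log hq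
  rcases le_total q (√Y) with h | h
  · exact (exp_neg_div_le_one hq₀ (by linarith)).trans <|
      (one_le_exp_one_mul_exp_neg_div hq₀ h).trans (le_add_of_nonneg_right (by positivity))
  · have hlog : log Y / 2 ≤ log q := by
      rw [← log_sqrt (by linarith)]
      exact log_le_log (sqrt_pos.2 (by linarith)) h
    have hone : 1 ≤ 4 / (1 + log Y) * log q := by
      rw [div_mul_eq_mul_div, one_le_div (by linarith)]
      linarith
    rw [← mul_assoc]
    exact (le_mul_of_one_le_left (exp_pos _).le hone).trans
      (le_add_of_nonneg_left (by positivity))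

theorem expSum_le_expSum_sqrt_add (hq : ∀ i, 2 ≤ q i)
    (hS : ∀ X : ℝ, 0 < X → Summable fun i ↦ log (q i) * exp (-(q i / X))) {Y : ℝ} (hY : 1 ≤ Y) :
    expSum q Y ≤ exp 1 * expSum q (√Y) + 4 / (1 + log Y) * logExpSum q Y := by
  have hY₀ : 0 < Y := by linarith
  have hP (X : ℝ) (hX : 0 < X) := summable_exp_neg_div hq (hS X hX)
  have h₁ := (hP (√Y) (sqrt_pos.2 hY₀)).mul_left (exp 1)
  have h₂ := (hS Y hY₀).mul_left (4 / (1 + log Y))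
  simp only [expSum, logExpSum, ← tsum_mul_left]
  rw [← h₁.tsum_add h₂]
  exact (hP Y hY₀).tsum_le_tsum (fun i ↦ exp_neg_div_le_exp_neg_div_sqrt_add (hq i) hY) (h₁.add h₂)

theorem sqrt_le_two_mul_div_one_add_log {Y : ℝ} (hY : 1 ≤ Y) : √Y ≤ 2 * (Y / (1 + log Y)) := by
  have hsqrt : 0 < √Y := sqrt_pos.2 (by linarith)
  have hlog : log Y ≤ 2 * √Y - 2 := by
    linarith [log_sqrt (show 0 ≤ Y by linarith), log_le_sub_one_of_pos hsqrt]
  rw [← mul_div_assoc, le_div_iff₀ (by linarith [log_nonneg hY])]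
  nlinarith [mul_self_sqrt (show 0 ≤ Y by linarith)]

theorem exists_expSum_le (hq : ∀ i, 2 ≤ q i)
    (hS : ∀ X : ℝ, 0 < X → Summable fun i ↦ log (q i) * exp (-(q i / X))) {B : ℝ} (hB : 0 < B)
    (hSB : ∀ X : ℝ, 1 ≤ X → logExpSum q X ≤ B * X) :
    ∃ C > 0, ∀ Y : ℝ, 1 ≤ Y → expSum q Y ≤ C * (Y / (1 + log Y)) := by
  refine ⟨4 * B * (exp 1 + 1), by positivity, fun Y hY ↦ ?_⟩
  have hL : 0 ≤ log Y := log_nonneg hY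
  have hsqrt : 1 ≤ √Y := one_le_sqrt.2 hY
  calc expSum q Y ≤ exp 1 * expSum q (√Y) + 4 / (1 + log Y) * logExpSum q Y :=
        expSum_le_expSum_sqrt_add hq hS hY
    _ ≤ exp 1 * (2 * (B * √Y)) + 4 / (1 + log Y) * (B * Y) := by
        gcongr
        · exact (expSum_le_two_mul_logExpSum hq (hS _ (by linarith))).trans
            (by linarith [hSB _ hsqrt])
        · exact hSB Y hY
    _ ≤ exp 1 * (2 * (B * (2 * (Y / (1 + log Y))))) + 4 / (1 + log Y) * (B * Y) := by
        gcongr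
        exact sqrt_le_two_mul_div_one_add_log hY
    _ = 4 * B * (exp 1 + 1) * (Y / (1 + log Y)) := by ring

theorem abs_log_mul_expSum_sub_logExpSum_le (hq : ∀ i, 2 ≤ q i)
    (hS : ∀ X : ℝ, 0 < X → Summable fun i ↦ log (q i) * exp (-(q i / X))) {X : ℝ} (hX : 0 < X) :
    |log X * expSum q X - logExpSum q X| ≤
      expSum q (2 * X) + exp 1 * ∑ k ∈ range (Nat.log 2 ⌊X⌋₊ + 1), expSum q (X / 2 ^ k) := by
  have hP (Y : ℝ) (hY : 0 < Y) := summable_exp_neg_div hq (hS Y hY)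
  have hPk (k : ℕ) : Summable fun i ↦ exp (-(q i / (X / 2 ^ k))) := hP _ (by positivity)
  have hdiff : HasSum (fun i ↦ (log X - log (q i)) * exp (-(q i / X)))
      (log X * expSum q X - logExpSum q X) := by
    simp_rw [sub_mul]
    exact ((hP X hX).hasSum.mul_left _).sub (hS X hX).hasSum
  have hbound : HasSum (fun i ↦ exp (-(q i / (2 * X))) +
        exp 1 * ∑ k ∈ range (Nat.log 2 ⌊X⌋₊ + 1), exp (-(q i / (X / 2 ^ k))))
      (expSum q (2 * X) + exp 1 * ∑ k ∈ range (Nat.log 2 ⌊X⌋₊ + 1), expSum q (X / 2 ^ k)) :=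
    (hP (2 * X) (by positivity)).hasSum.add ((hasSum_sum fun k _ ↦ (hPk k).hasSum).mul_left _)
  refine hdiff.norm_le_of_bounded hbound fun i ↦ ?_
  rw [norm_eq_abs, abs_mul, abs_of_pos (exp_pos _)]
  exact abs_log_sub_log_mul_exp_neg_div_le (one_le_two.trans (hq i)) hX

theorem one_add_log_le_mul_one_add_log_div_two_pow {X : ℝ} {k : ℕ} (hk : 2 ^ k ≤ X) :
    1 + log X ≤ (k + 1) * (1 + log (X / 2 ^ k)) := by
  have hpow : (0 : ℝ) < 2 ^ k := by positivity
  have hnonneg : 0 ≤ log (X / 2 ^ k) := log_nonneg ((one_le_div hpow).2 hk)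
  have hlog : log X = log (X / 2 ^ k) + k * log 2 := by
    rw [log_div (hpow.trans_le hk).ne' hpow.ne', log_pow]
    ring
  have hk₂ : k * log 2 ≤ k := mul_le_of_le_one_right k.cast_nonneg (by linarith [log_two_lt_d9])
  have hmul : 0 ≤ k * log (X / 2 ^ k) := by positivity
  linarith

theorem sum_range_expSum_div_two_pow_le {C : ℝ} (hC : 0 ≤ C)
    (hP : ∀ Y : ℝ, 1 ≤ Y → expSum q Y ≤ C * (Y / (1 + log Y))) {X : ℝ} (hX : 1 ≤ X) :
    ∑ k ∈ range (Nat.log 2 ⌊X⌋₊ + 1), expSum q (X / 2 ^ k) ≤ 4 * C * (X / (1 + log X)) := by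
  have hL : 0 < 1 + log X := by linarith [log_nonneg hX]
  calc ∑ k ∈ range (Nat.log 2 ⌊X⌋₊ + 1), expSum q (X / 2 ^ k)
      ≤ ∑ k ∈ range (Nat.log 2 ⌊X⌋₊ + 1), C * (X / (1 + log X)) * ((k + 1) / 2 ^ k) := by
        refine sum_le_sum fun k hk ↦ ?_
        rw [mem_range_nat_log_floor_add_one hX] at hk
        have hY : 1 ≤ X / 2 ^ k := (one_le_div (by positivity)).2 hk
        have : 0 < 1 + log (X / 2 ^ k) := by linarith [log_nonneg hY]
        calc expSum q (X / 2 ^ k) ≤ C * (X / 2 ^ k / (1 + log (X / 2 ^ k))) := hP _ hY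
          _ ≤ C * (X / 2 ^ k / ((1 + log X) / (k + 1))) := by
              gcongr
              rw [div_le_iff₀' (by positivity)]
              exact one_add_log_le_mul_one_add_log_div_two_pow hk
          _ = C * (X / (1 + log X)) * ((k + 1) / 2 ^ k) := by field_simp
    _ = C * (X / (1 + log X)) * ∑ k ∈ range (Nat.log 2 ⌊X⌋₊ + 1), ((k : ℝ) + 1) / 2 ^ k :=
        (mul_sum _ _ _).symm
    _ ≤ C * (X / (1 + log X)) * 4 := by gcongr; exact sum_range_succ_div_two_pow_le _
    _ = 4 * C * (X / (1 + log X)) := by ring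

theorem exists_abs_expSum_sub_le (hq : ∀ i, 2 ≤ q i)
    (hS : ∀ X : ℝ, 0 < X → Summable fun i ↦ log (q i) * exp (-(q i / X))) {C : ℝ}
    (hC : ∀ X : ℝ, 3 ≤ X → |logExpSum q X - X| ≤ C * (X / log X)) :
    ∃ D, ∀ X : ℝ, 3 ≤ X → |expSum q X - X / log X| ≤ D * (X / log X ^ 2) := by
  obtain ⟨B, hB, hSB⟩ := exists_logExpSum_le
    (monotoneOn_logExpSum (fun i ↦ one_le_two.trans (hq i)) hS) hC
  obtain ⟨A, hA, hPA⟩ := exists_expSum_le hq hS hB hSB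
  refine ⟨2 * A + exp 1 * (4 * A) + C, fun X hX ↦ ?_⟩
  have hX₀ : 0 < X := by linarith
  have hlog : 0 < log X := one_pos.trans (one_lt_log_of_three_le hX)
  have hlog₂ : log X ≤ log (2 * X) := log_le_log hX₀ (by linarith)
  have hdiv : X / (1 + log X) ≤ X / log X := by gcongr; linarith
  have htwo : expSum q (2 * X) ≤ 2 * A * (X / log X) :=
    calc expSum q (2 * X) ≤ A * (2 * X / (1 + log (2 * X))) := hPA _ (by linarith)
      _ ≤ A * (2 * X / log X) := by gcongr; linarith
      _ = 2 * A * (X / log X) := by ring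
  have hdyadic := sum_range_expSum_div_two_pow_le hA.le hPA (show 1 ≤ X by linarith)
  have hdiff : |log X * expSum q X - logExpSum q X| ≤
      2 * A * (X / log X) + exp 1 * (4 * A * (X / log X)) :=
    (abs_log_mul_expSum_sub_logExpSum_le hq hS hX₀).trans
      (by gcongr; exact hdyadic.trans (by gcongr))
  have hfactor : expSum q X - X / log X =
      (log X * expSum q X - logExpSum q X + (logExpSum q X - X)) / log X := by
    field_simp
    ring
  rw [hfactor, abs_div, abs_of_pos hlog, div_le_iff₀ hlog]
  calc |log X * expSum q X - logExpSum q X + (logExpSum q X - X)|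
      ≤ 2 * A * (X / log X) + exp 1 * (4 * A * (X / log X)) + C * (X / log X) :=
        (abs_add_le _ _).trans (add_le_add hdiff (hC X hX))
    _ = (2 * A + exp 1 * (4 * A) + C) * (X / log X ^ 2) * log X := by field_simp

end ExponentialSums

section Rescaling

open Real

variable {P : ℝ → ℝ} {a C : ℝ}

theorem abs_mul_comp_div_sub_le_of_three_mul_le (ha : 1 ≤ a)
    (hP : ∀ X : ℝ, 3 ≤ X → |P X - X / log X| ≤ C * (X / log X ^ 2)) {x : ℝ} (hx : 3 * a ≤ x) :
    |a * P (x / a) - x / log x| ≤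
      (C * (1 + log a) ^ 2 + (1 + log a) * log a) * (x / log x ^ 2) := by
  have ha₀ : 0 < a := one_pos.trans_le ha
  have hla : 0 ≤ log a := log_nonneg ha
  have hx₀ : 0 < x := by linarith
  have hX : 3 ≤ x / a := (le_div_iff₀ ha₀).2 hx
  have hlX : 1 < log (x / a) := one_lt_log_of_three_le hX
  have hlog : log x = log (x / a) + log a := by rw [log_div hx₀.ne' ha₀.ne', sub_add_cancel]
  have hlx : 0 < log x := by linarith
  have hle : log x ≤ (1 + log a) * log (x / a) := by nlinarith
  have hC : 0 ≤ C := by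
    have h := (abs_nonneg _).trans (hP _ hX)
    exact nonneg_of_mul_nonneg_left h (by positivity)
  have hscale : |a * P (x / a) - x / log (x / a)| ≤ C * (x / log (x / a) ^ 2) := by
    have h : a * P (x / a) - x / log (x / a) = a * (P (x / a) - x / a / log (x / a)) := by
      field_simp
    rw [h, abs_mul, abs_of_pos ha₀]
    calc a * |P (x / a) - x / a / log (x / a)| ≤ a * (C * (x / a / log (x / a) ^ 2)) := by
          gcongr
          exact hP _ hX
      _ = C * (x / log (x / a) ^ 2) := by field_simp
  have hshift : |x / log (x / a) - x / log x| = log a * (x / (log (x / a) * log x)) := by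
    have h : x / log (x / a) - x / log x = log a * (x / (log (x / a) * log x)) := by
      rw [div_sub_div _ _ (by linarith) hlx.ne', hlog]
      ring
    rw [h, abs_of_nonneg (by positivity)]
  calc |a * P (x / a) - x / log x|
      ≤ C * (x / log (x / a) ^ 2) + log a * (x / (log (x / a) * log x)) :=
        (abs_sub_le _ _ _).trans (add_le_add hscale hshift.le)
    _ ≤ C * (x / (log x / (1 + log a)) ^ 2) + log a * (x / (log x / (1 + log a) * log x)) := by
        have h : log x / (1 + log a) ≤ log (x / a) := (div_le_iff₀' (by linarith)).2 hle
        gcongr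
    _ = (C * (1 + log a) ^ 2 + (1 + log a) * log a) * (x / log x ^ 2) := by
        field_simp

theorem abs_mul_comp_div_sub_le_of_le_three_mul (ha : 0 < a) (hmono : MonotoneOn P (Set.Ioi 0))
    (hnonneg : ∀ X, 0 ≤ P X) {x : ℝ} (hx : 2 ≤ x) (hxa : x ≤ 3 * a) :
    |a * P (x / a) - x / log x| ≤
      (a * P 3 * log (3 * a) ^ 2 + log (3 * a)) * (x / log x ^ 2) := by
  have hx₀ : 0 < x := by linarith
  have hlx : 0 < log x := log_pos (by linarith)
  have hlog : log x ≤ log (3 * a) := log_le_log hx₀ hxa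
  have hP₃ : P (x / a) ≤ P 3 :=
    hmono (div_pos hx₀ ha) (Set.mem_Ioi.2 three_pos) ((div_le_iff₀ ha).2 hxa)
  have hP₀ : 0 ≤ a * P (x / a) := mul_nonneg ha.le (hnonneg _)
  have hquot : 0 ≤ x / log x := by positivity
  have hsq : 1 ≤ log (3 * a) ^ 2 * (x / log x ^ 2) := by
    rw [← mul_div_assoc, one_le_div (by positivity)]
    nlinarith [pow_le_pow_left₀ hlx.le hlog 2, sq_nonneg (log (3 * a))]
  calc |a * P (x / a) - x / log x| ≤ a * P 3 + x / log x := by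
        have : a * P (x / a) ≤ a * P 3 := by gcongr
        exact abs_le.2 ⟨by linarith, by linarith⟩
    _ ≤ a * P 3 * (log (3 * a) ^ 2 * (x / log x ^ 2)) + log (3 * a) * (x / log x ^ 2) := by
        refine add_le_add (le_mul_of_one_le_right (mul_nonneg ha.le (hnonneg 3)) hsq) ?_
        calc x / log x = log x * (x / log x ^ 2) := by field_simp
          _ ≤ log (3 * a) * (x / log x ^ 2) := by gcongr
    _ = _ := by ring

theorem exists_abs_mul_comp_div_sub_le (ha : 1 ≤ a) (hmono : MonotoneOn P (Set.Ioi 0))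
    (hnonneg : ∀ X, 0 ≤ P X)
    (hP : ∀ X : ℝ, 3 ≤ X → |P X - X / log X| ≤ C * (X / log X ^ 2)) :
    ∃ c, ∀ x : ℝ, 2 ≤ x → |a * P (x / a) - x / log x| ≤ c * (x / log x ^ 2) := by
  refine ⟨max (C * (1 + log a) ^ 2 + (1 + log a) * log a)
    (a * P 3 * log (3 * a) ^ 2 + log (3 * a)), fun x hx ↦ ?_⟩
  have hw : 0 ≤ x / log x ^ 2 := by positivity
  rcases le_total (3 * a) x with h | h
  · exact (abs_mul_comp_div_sub_le_of_three_mul_le ha hP h).trans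
      (mul_le_mul_of_nonneg_right (le_max_left _ _) hw)
  · exact (abs_mul_comp_div_sub_le_of_le_three_mul (one_pos.trans_le ha) hmono hnonneg hx h).trans
      (mul_le_mul_of_nonneg_right (le_max_right _ _) hw)

end Rescaling

section PrimeIdeals

open Real

variable {ι : Type*} {q : ι → ℝ}

theorem countable_of_summable_rpow (hq : ∀ i, 0 < q i) {r : ℝ}
    (h : Summable fun i ↦ q i ^ r) : Countable ι := by
  have hsupp : Function.support (fun i ↦ q i ^ r) = Set.univ :=
    Set.eq_univ_of_forall fun i ↦ (rpow_pos_of_pos (hq i) r).ne'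
  exact Set.countable_univ_iff.1 (hsupp ▸ h.countable_support)

theorem exists_abs_logExpSum_sub_le (hq : ∀ i, 2 ≤ q i)
    (hsum : ∀ σ : ℝ, 1 < σ → Summable fun i ↦ q i ^ (-σ)) {H : ℂ → ℂ}
    (hd : DifferentiableOn ℂ H {s | 1 < s.re}) (hH : HasPolyGrowthOn H {s | 1 < s.re})
    (hH' : HasPolyGrowthOn (deriv H) {s | 1 < s.re})
    (hD : ∀ s : ℂ, 1 < s.re → ∑' i, (log (q i) : ℂ) * (q i : ℂ) ^ (-s) = 1 / (s - 1) + H s) :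
    ∃ C, ∀ X : ℝ, 3 ≤ X → |logExpSum q X - X| ≤ C * (X / log X) := by
  have hq₁ (i : ι) : 1 ≤ q i := one_le_two.trans (hq i)
  have hq₀ (i : ι) : 0 < q i := one_pos.trans_le (hq₁ i)
  have := countable_of_summable_rpow hq₀ (hsum 2 one_lt_two)
  have hb (σ : ℝ) (hσ : 1 < σ) : Summable fun i ↦ ‖(log (q i) : ℂ)‖ * q i ^ (-σ) := by
    simpa only [Complex.norm_of_nonneg (log_nonneg (hq₁ _))]
      using summable_log_mul_rpow_neg hq₁ hsum hσ
  obtain ⟨C, hC⟩ := exists_norm_tsum_mul_exp_neg_div_sub_le hq₀ hb hd hH hH' hD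
  refine ⟨C, fun X hX ↦ (le_of_eq ?_).trans (hC X hX)⟩
  rw [← norm_eq_abs, ← Complex.norm_real, logExpSum]
  push_cast
  rfl

theorem exists_abs_tsum_mul_exp_neg_mul_div_sub_le (hq : ∀ i, 2 ≤ q i)
    (hsum : ∀ σ : ℝ, 1 < σ → Summable fun i ↦ q i ^ (-σ)) {C : ℝ}
    (hC : ∀ X : ℝ, 3 ≤ X → |logExpSum q X - X| ≤ C * (X / log X)) {a : ℝ} (ha : 1 ≤ a) :
    ∃ c, ∀ x : ℝ, 2 ≤ x →
      |∑' i, a * exp (-a * q i / x) - x / log x| ≤ c * (x / log x ^ 2) := by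
  have hS (X : ℝ) (hX : 0 < X) :=
    summable_log_mul_exp_neg_div (fun i ↦ one_le_two.trans (hq i)) hsum hX
  have hmono := monotoneOn_expSum (fun i ↦ two_pos.le.trans (hq i))
    fun X hX ↦ summable_exp_neg_div hq (hS X hX)
  obtain ⟨D, hD⟩ := exists_abs_expSum_sub_le hq hS hC
  obtain ⟨c, hc⟩ := exists_abs_mul_comp_div_sub_le ha hmono (expSum_nonneg q) hD
  refine ⟨c, fun x hx ↦ ?_⟩
  convert hc x hx using 4
  rw [expSum, ← tsum_mul_left]
  congr! 4 with i
  rw [div_div_eq_mul_div]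
  ring

theorem two_le_absNorm_of_isPrime {R : Type*} [CommRing R] [IsDedekindDomain R] [Module.Free ℤ R]
    [Module.Finite ℤ R] {p : Ideal R} (hp : p ≠ ⊥) (hp' : p.IsPrime) : 2 ≤ Ideal.absNorm p := by
  have h₀ : Ideal.absNorm p ≠ 0 := mt Ideal.absNorm_eq_zero_iff.1 hp
  have h₁ : Ideal.absNorm p ≠ 1 := mt Ideal.absNorm_eq_one_iff.1 hp'.ne_top
  omega

variable (K : Type*) [Field K] [NumberField K]

/-- The absolute norm as a real-valued function on the nonzero prime ideals of `𝓞 K`. -/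
noncomputable def primeNorm (p : {p : Ideal (𝓞 K) // p ≠ ⊥ ∧ p.IsPrime}) : ℝ :=
  Ideal.absNorm p.1

theorem two_le_primeNorm (p : {p : Ideal (𝓞 K) // p ≠ ⊥ ∧ p.IsPrime}) : 2 ≤ primeNorm K p :=
  Nat.ofNat_le_cast.2 (two_le_absNorm_of_isPrime p.2.1 p.2.2)

variable [Subsingleton (InfinitePlace K)]

theorem LSeriesSummable_card_absNorm {s : ℂ} (hs : 1 < s.re) :
    LSeriesSummable (fun n ↦ Nat.card {I : Ideal (𝓞 K) // Ideal.absNorm I = n}) s := by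
  obtain ⟨B, hB⟩ := exists_abs_sum_card_norm_eq_sub_le K
  simpa only [Complex.ofReal_natCast] using LSeriesSummable_of_abs_sum_sub_le
    (fun _ ↦ Nat.cast_nonneg _) (sub_le_self _ (by positivity)) hB hs

theorem summable_primeNorm_rpow_neg {σ : ℝ} (hσ : 1 < σ) :
    Summable fun p ↦ primeNorm K p ^ (-σ) := by
  have hσ₀ : (σ : ℂ) ≠ 0 := Complex.ofReal_ne_zero.2 (by linarith)
  refine ((summable_norm_absNormCpowNeg hσ₀
    (LSeriesSummable_card_absNorm K hσ)).subtype {p | p ≠ ⊥ ∧ p.IsPrime}).congr fun p ↦ ?_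
  rw [primeNorm, ← Complex.norm_of_nonneg (rpow_nonneg (Nat.cast_nonneg _) _),
    Complex.ofReal_cpow (Nat.cast_nonneg _)]
  simp [absNormCpowNeg]

theorem exists_abs_logExpSum_primeNorm_sub_le :
    ∃ C, ∀ X : ℝ, 3 ≤ X → |logExpSum (primeNorm K) X - X| ≤ C * (X / log X) := by
  obtain ⟨B, hB⟩ := exists_abs_sum_card_norm_eq_sub_le K
  have hθ : 1 - (Module.finrank ℚ K : ℝ)⁻¹ < 1 :=
    sub_lt_self _ (inv_pos.2 (Nat.cast_pos.2 Module.finrank_pos))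
  obtain ⟨G, hd, hG₁, hGZ, hG⟩ :=
    exists_continuation_sub_one_mul_LSeries (fun _ ↦ Nat.cast_nonneg _) hθ.le hB
  simp only [Complex.ofReal_natCast] at hGZ
  have hs₀ (s : ℂ) (hs : 1 < s.re) : s ≠ 0 := fun h ↦ by norm_num [h] at hs
  have hres : G 1 ≠ 0 := by
    rw [hG₁]
    exact Complex.ofReal_ne_zero.2 (dedekindZeta_residue_pos K).ne'
  obtain ⟨H, hH, hHg, hHg', hD⟩ := exists_tsum_log_mul_cpow_neg_eq_add (two_le_primeNorm K)
    (fun σ ↦ summable_primeNorm_rpow_neg K) hθ hd hG hres hGZ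
    (fun s hs ↦ dedekindZeta_ne_zero_of_LSeriesSummable (hs₀ s hs)
      (LSeriesSummable_card_absNorm K hs))
    (fun s hs ↦ hasProd_one_sub_absNorm_cpow (hs₀ s hs) (LSeriesSummable_card_absNorm K hs))
  exact exists_abs_logExpSum_sub_le (two_le_primeNorm K)
    (fun σ ↦ summable_primeNorm_rpow_neg K) hH hHg hHg' hD

end PrimeIdeals

theorem gaussian_weight_prime_sum_general (K : Type*) [Field K] [NumberField K]
    [Subsingleton (InfinitePlace K)] :
    ∃ c : ℝ, ∀ (N : ℝ) (r : Ideal (𝓞 K)), r ≠ ⊥ → (Ideal.absNorm r : ℝ) ≤ N / 2 →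
      |(∑' s : {p : Ideal (𝓞 K) // p ≠ ⊥ ∧ p.IsPrime},
            Real.pi * Real.exp (-Real.pi * (Ideal.absNorm (r * s.1) : ℝ) / N)) -
          (N / (Ideal.absNorm r : ℝ)) / Real.log (N / (Ideal.absNorm r : ℝ))|
        ≤ c * (N / (Ideal.absNorm r : ℝ)) / (Real.log (N / (Ideal.absNorm r : ℝ)))^2 := by
  obtain ⟨C, hC⟩ := exists_abs_logExpSum_primeNorm_sub_le K
  obtain ⟨c, hc⟩ := exists_abs_tsum_mul_exp_neg_mul_div_sub_le (two_le_primeNorm K)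
    (fun σ ↦ summable_primeNorm_rpow_neg K) hC (by linarith [Real.pi_gt_three] : 1 ≤ Real.pi)
  refine ⟨c, fun N r hr hrN ↦ ?_⟩
  have hr₀ : (0 : ℝ) < Ideal.absNorm r :=
    Nat.cast_pos.2 (Nat.pos_of_ne_zero (mt Ideal.absNorm_eq_zero_iff.1 hr))
  have hx : 2 ≤ N / Ideal.absNorm r := (le_div_comm₀ two_pos hr₀).2 hrN
  have hweight (s : {p : Ideal (𝓞 K) // p ≠ ⊥ ∧ p.IsPrime}) :
      -Real.pi * (Ideal.absNorm (r * s.1) : ℝ) / N =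
        -Real.pi * primeNorm K s / (N / Ideal.absNorm r) := by
    rw [map_mul, Nat.cast_mul, div_div_eq_mul_div, primeNorm]
    ring
  simp_rw [hweight, mul_div_assoc c]
  exact hc _ hx

theorem subsingleton_infinitePlace_of_finrank_eq_two {K : Type*} [Field K] [NumberField K]
    (hdeg : Module.finrank ℚ K = 2) (himag : IsEmpty (K →+* ℝ)) :
    Subsingleton (InfinitePlace K) := by
  have hcomplex (w : InfinitePlace K) : w.mult = 2 :=
    InfinitePlace.mult_isComplex ⟨w, InfinitePlace.not_isReal_iff_isComplex.1
      fun hw ↦ himag.elim (InfinitePlace.embedding_of_isReal hw)⟩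
  have hsum := InfinitePlace.sum_mult_eq (K := K)
  simp only [hcomplex, hdeg, Finset.sum_const, Finset.card_univ, smul_eq_mul] at hsum
  exact Fintype.card_le_one_iff_subsingleton.1 (by omega)

/-- **Prime ideal average of the Gaussian weight in imaginary quadratic fields:**
with `W(𝔫) = π exp(−π 𝒩(𝔫)/N)`, for all `N ≥ 3` and nonzero ideals `𝔯` with
`𝒩(𝔯) ≤ N/2`, one has
`∑_{𝔰∈ℙ} W(𝔯𝔰) = (N/𝒩(𝔯))/log(N/𝒩(𝔯)) + O((N/𝒩(𝔯))/log²(N/𝒩(𝔯)))`. -/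
theorem gaussian_weight_prime_sum
    (K : Type*) [Field K] [NumberField K]
    (hdeg : Module.finrank ℚ K = 2)
    (himag : IsEmpty (K →+* ℝ))
    (hclass : NumberField.classNumber K = 1) :
    ∃ c : ℝ, ∀ N : ℝ, 3 ≤ N → ∀ r : Ideal (𝓞 K), r ≠ ⊥ → (Ideal.absNorm r : ℝ) ≤ N / 2 →
      |(∑' s : {p : Ideal (𝓞 K) // p ≠ ⊥ ∧ p.IsPrime},
            Real.pi * Real.exp (-Real.pi * (Ideal.absNorm (r * s.1) : ℝ) / N)) -
          (N / (Ideal.absNorm r : ℝ)) / Real.log (N / (Ideal.absNorm r : ℝ))|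
        ≤ c * (N / (Ideal.absNorm r : ℝ)) / (Real.log (N / (Ideal.absNorm r : ℝ)))^2 := by
  have := subsingleton_infinitePlace_of_finrank_eq_two hdeg himag
  exact (gaussian_weight_prime_sum_general K).imp fun _ hc N _ ↦ hc N
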